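/- arXiv:1211.7236 — 3 statements merged into one kernel-verified Lean document; each statement's English description precedes it below -/
import Mathlib

section
/- Fix c > 0 and T > 0. There exists a constant C₁ > 0 such that for every smooth solution (E, B) on [0,T]×𝕋² of the homogeneous 2D Maxwell system ∂ₜB + c(∂_{x₁}E₂ − ∂_{x₂}E₁) = 0, ∂ₜE + c(∂_{x₂}B, −∂_{x₁}B) = 0, with div E(0,·) = 0 and ∫_{𝕋²} B(0,x) dx = 0, one has ∫₀ᵀ∫_{𝕋²} |B|² dx dt ≤ C₁ ∫₀ᵀ∫_{𝕋²} |E|² dx dt. -/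
noncomputable section

open MeasureTheory Real

/-- Points of the plane; the torus `𝕋²` is represented via `ℤ²`-periodic objects on `ℝ²`. -/
abbrev V2 := ℝ × ℝ

/-- `v ↦ v⊥ = (v₂, -v₁)`. -/
def pperp (v : V2) : V2 := (v.2, -v.1)

/-- Euclidean norm on `ℝ²`. -/
noncomputable def en (v : V2) : ℝ := Real.sqrt (v.1 ^ 2 + v.2 ^ 2)

/-- Relativistic velocity `v̂ = v/√(1+|v|²/c²)` for speed of light `c`. -/
noncomputable def vhat (c : ℝ) (v : V2) : V2 :=
  (1 / Real.sqrt (1 + (v.1 ^ 2 + v.2 ^ 2) / c ^ 2)) • v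

/-- `ℤ²`-periodicity of a function on `ℝ²` (i.e. the function lives on the torus `𝕋²`). -/
def Zper {α : Type*} (g : V2 → α) : Prop :=
  ∀ (x : V2) (m n : ℤ), g (x.1 + (m : ℝ), x.2 + (n : ℝ)) = g x

/-- A fundamental domain for the torus. -/
def unitSq : Set V2 := Set.Icc ((0 : ℝ), (0 : ℝ)) ((1 : ℝ), (1 : ℝ))

/-- Integral over the torus of a (periodic) function. -/
noncomputable def intT2 (g : V2 → ℝ) : ℝ := ∫ x in unitSq, g x

/-- Integral over `𝕋² × ℝ²`. -/
noncomputable def intT2R2 (g : V2 → V2 → ℝ) : ℝ := ∫ x in unitSq, ∫ v : V2, g x v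

/-- Spatial divergence of a vector field on `ℝ²`. -/
noncomputable def divF (E : V2 → V2) (x : V2) : ℝ :=
  fderiv ℝ (fun y => (E y).1) x ((1 : ℝ), (0 : ℝ)) +
    fderiv ℝ (fun y => (E y).2) x ((0 : ℝ), (1 : ℝ))

/-- Geometric control condition for a (periodic) set `ω ⊆ 𝕋²`. -/
def GCC (ω : Set V2) : Prop :=
  ∀ x e : V2, en e = 1 → ∃ y : ℝ, 0 ≤ y ∧ x + y • e ∈ ω

/-- Open ball of the torus, of center `x₀` and radius `r` (as a periodic subset of `ℝ²`). -/
def ballT2 (x₀ : V2) (r : ℝ) : Set V2 :=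
  {x : V2 | ∃ m n : ℤ, en (x.1 - (x₀.1 + (m : ℝ)), x.2 - (x₀.2 + (n : ℝ))) < r}

/-- The full preimage in `ℝ²` of the image in `𝕋²` of the line through `p` directed by `d`. -/
def periodizedLine (p d : V2) : Set V2 :=
  {x : V2 | ∃ (t : ℝ) (m n : ℤ), x = p + t • d + ((m : ℝ), (n : ℝ))}

/-- The strip assumption: `ω` contains the image of a straight line of `ℝ²`
which is closed in the torus. -/
def StripAssumption (ω : Set V2) : Prop :=
  ∃ p d : V2, d ≠ 0 ∧ IsClosed (periodizedLine p d) ∧ periodizedLine p d ⊆ ω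

/-- All iterated derivatives of order at most `k` are bounded by `κ` in sup norm. -/
def DerivBound {E F : Type*} [NormedAddCommGroup E] [NormedSpace ℝ E]
    [NormedAddCommGroup F] [NormedSpace ℝ F] (k : ℕ) (κ : ℝ) (g : E → F) : Prop :=
  ∀ i : ℕ, i ≤ k → ∀ p, ‖iteratedFDeriv ℝ i g p‖ ≤ κ

/-- Relativistic characteristics for the force field `Force`, with speed of light `c`,
starting from `(x,v)` at time `s`. -/
def IsRelChar (c : ℝ) (Force : ℝ → V2 → V2 → V2) (s : ℝ) (x v : V2)
    (X V : ℝ → V2) : Prop :=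
  X s = x ∧ V s = v ∧
    ∀ t : ℝ, HasDerivAt X (vhat c (V t)) t ∧ HasDerivAt V (Force t (X t) (V t)) t

/-- `(F, E, b)` is a classical, `𝕋²`-periodic solution on `[0,T]` of the 2D relativistic
Vlasov–Maxwell system with speed of light `c` and source `S`. -/
def IsVMSolution (c T : ℝ) (F : ℝ × V2 × V2 → ℝ) (E : ℝ × V2 → V2)
    (b : ℝ × V2 → ℝ) (S : ℝ × V2 × V2 → ℝ) : Prop :=
  ContDiff ℝ 1 F ∧ ContDiff ℝ 1 E ∧ ContDiff ℝ 1 b ∧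
  (∀ t v, Zper fun x => F (t, x, v)) ∧ (∀ t, Zper fun x => E (t, x)) ∧
  (∀ t, Zper fun x => b (t, x)) ∧
  ∀ t ∈ Set.Icc (0 : ℝ) T, ∀ x v : V2,
    -- Vlasov equation: ∂ₜf + v̂·∇ₓf + (E + c⁻¹ v̂⊥ b)·∇ᵥf = S
    (fderiv ℝ F (t, x, v)
        ((1 : ℝ), vhat c v, E (t, x) + (c⁻¹ * b (t, x)) • pperp (vhat c v))
      = S (t, x, v)) ∧
    -- ∂ₜE₁ − c ∂_{x₂} b = −∫ f v̂₁ dv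
    (fderiv ℝ (fun p => (E p).1) (t, x) ((1 : ℝ), ((0 : ℝ), (0 : ℝ)))
        - c * fderiv ℝ b (t, x) ((0 : ℝ), ((0 : ℝ), (1 : ℝ)))
      = -∫ w : V2, F (t, x, w) * (vhat c w).1) ∧
    -- ∂ₜE₂ + c ∂_{x₁} b = −∫ f v̂₂ dv
    (fderiv ℝ (fun p => (E p).2) (t, x) ((1 : ℝ), ((0 : ℝ), (0 : ℝ)))
        + c * fderiv ℝ b (t, x) ((0 : ℝ), ((1 : ℝ), (0 : ℝ)))
      = -∫ w : V2, F (t, x, w) * (vhat c w).2) ∧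
    -- ∂ₜb + c (∂_{x₁}E₂ − ∂_{x₂}E₁) = 0
    (fderiv ℝ b (t, x) ((1 : ℝ), ((0 : ℝ), (0 : ℝ)))
        + c * (fderiv ℝ (fun p => (E p).2) (t, x) ((0 : ℝ), ((1 : ℝ), (0 : ℝ)))
            - fderiv ℝ (fun p => (E p).1) (t, x) ((0 : ℝ), ((0 : ℝ), (1 : ℝ)))) = 0) ∧
    -- Gauss law: ∂_{x₁}E₁ + ∂_{x₂}E₂ = ∫ f dv − ∫∫ f dv dx
    (fderiv ℝ (fun p => (E p).1) (t, x) ((0 : ℝ), ((1 : ℝ), (0 : ℝ)))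
        + fderiv ℝ (fun p => (E p).2) (t, x) ((0 : ℝ), ((0 : ℝ), (1 : ℝ)))
      = (∫ w : V2, F (t, x, w)) - intT2R2 fun y w => F (t, y, w))


/-- `(E, b)` is a smooth, periodic solution on `[0,T]` of the homogeneous 2D Maxwell
system `∂ₜb + c(∂₁E₂ − ∂₂E₁) = 0`, `∂ₜE + c(∂₂b, −∂₁b) = 0`. -/
def IsHomMaxwellSolution (c T : ℝ) (E : ℝ × V2 → V2) (b : ℝ × V2 → ℝ) : Prop :=
  ContDiff ℝ (⊤ : ℕ∞) E ∧ ContDiff ℝ (⊤ : ℕ∞) b ∧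
  (∀ t, Zper fun x => E (t, x)) ∧ (∀ t, Zper fun x => b (t, x)) ∧
  ∀ t ∈ Set.Icc (0 : ℝ) T, ∀ x : V2,
    (fderiv ℝ b (t, x) ((1 : ℝ), ((0 : ℝ), (0 : ℝ)))
        + c * (fderiv ℝ (fun p => (E p).2) (t, x) ((0 : ℝ), ((1 : ℝ), (0 : ℝ)))
            - fderiv ℝ (fun p => (E p).1) (t, x) ((0 : ℝ), ((0 : ℝ), (1 : ℝ)))) = 0) ∧
    (fderiv ℝ (fun p => (E p).1) (t, x) ((1 : ℝ), ((0 : ℝ), (0 : ℝ)))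
        + c * fderiv ℝ b (t, x) ((0 : ℝ), ((0 : ℝ), (1 : ℝ))) = 0) ∧
    (fderiv ℝ (fun p => (E p).2) (t, x) ((1 : ℝ), ((0 : ℝ), (0 : ℝ)))
        - c * fderiv ℝ b (t, x) ((0 : ℝ), ((1 : ℝ), (0 : ℝ))) = 0)


/-!
Writing `Curl b = (∂₂b, -∂₁b)`, the quantity `K = ‖b‖² - (α/β)‖E‖²` is conserved, so only `K` has to
be bounded by the time average of `‖E‖²`. Choose `t₀` at which `‖E‖²` equals this average. The
potential `F(t) = ∫_{t₀}^t b` has zero mean and satisfies `Curl F = -(E(t) - E(t₀))/β`, so the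
Poincaré inequality bounds `‖F‖` by `E`. Moreover
the second time derivative of `‖F‖²/2` is `K + (α/β)(2‖E‖² - ⟨E(t₀), E⟩)`, and testing this identity
against `t²(T - t)²` moves both derivatives off `F`.
-/

section ParametricIntegral

variable {P X F : Type*} [NormedAddCommGroup P] [NormedSpace ℝ P]
  [NormedAddCommGroup F] [NormedSpace ℝ F] [NormedAddCommGroup X] [NormedSpace ℝ X]
  {f : P → X → F}

lemma continuous_fderiv_left (hf : ContDiff ℝ 1 ↿f) :
    Continuous ↿(fun p x => fderiv ℝ (f · x) p) :=
  Continuous.fderiv_one (f := fun (q : P × X) p => f p q.2)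
    (hf.comp (contDiff_snd.prodMk (contDiff_snd.comp contDiff_fst))) continuous_fst

variable [LocallyCompactSpace P] [MeasurableSpace X] [OpensMeasurableSpace X] {μ : Measure X}
  [IsLocallyFiniteMeasure μ] {K : Set X}

lemma hasFDerivAt_setIntegral (hK : IsCompact K) (hf : ContDiff ℝ 1 ↿f) (p : P) :
    HasFDerivAt (fun q => ∫ x in K, f q x ∂μ) (∫ x in K, fderiv ℝ (f · x) p ∂μ) p := by
  have hf' := continuous_fderiv_left hf
  obtain ⟨N, hNc, hN⟩ := exists_compact_mem_nhds p
  obtain ⟨M, hM⟩ := (hNc.prod hK).exists_bound_of_continuousOn hf'.continuousOn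
  have hslice (q : P) : Continuous (f q) := hf.continuous.comp (Continuous.prodMk_right q)
  have hslice' : Continuous fun x => fderiv ℝ (f · x) p := hf'.comp (Continuous.prodMk_right p)
  have hdiff (x : X) : Differentiable ℝ (f · x) :=
    (hf.comp (contDiff_id.prodMk contDiff_const)).differentiable one_ne_zero
  refine hasFDerivAt_integral_of_dominated_of_fderiv_le (bound := fun _ => M) hN
    (.of_forall fun q => ?_) ((hslice p).continuousOn.integrableOn_compact hK) ?_ ?_
    (continuousOn_const.integrableOn_compact hK)
    (.of_forall fun x q _ => (hdiff x q).hasFDerivAt)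
  · exact (hslice q).continuousOn.aestronglyMeasurable_of_isCompact hK hK.measurableSet
  · exact hslice'.continuousOn.aestronglyMeasurable_of_isCompact hK hK.measurableSet
  · filter_upwards [ae_restrict_mem hK.measurableSet] with x hx q hq
    exact hM (q, x) ⟨hq, hx⟩

lemma hasDerivAt_setIntegral (hK : IsCompact K) {f : ℝ → X → F}
    (hf : ContDiff ℝ 1 ↿f) {f' : X → F} {t : ℝ} (hf' : ∀ x, HasDerivAt (f · x) (f' x) t) :
    HasDerivAt (fun s => ∫ x in K, f s x ∂μ) (∫ x in K, f' x ∂μ) t := by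
  have hint : IntegrableOn (fun x => fderiv ℝ (f · x) t) K μ :=
    ((continuous_fderiv_left hf).comp (.prodMk_right t)).continuousOn.integrableOn_compact hK
  refine (hasFDerivAt_setIntegral hK hf t).hasDerivAt.congr_deriv ?_
  simp only [ContinuousLinearMap.integral_apply hint, fderiv_apply_one_eq_deriv, (hf' _).deriv]

lemma contDiff_setIntegral [SecondCountableTopology X] (hK : IsCompact K) (hf : ContDiff ℝ 1 ↿f) :
    ContDiff ℝ 1 fun p => ∫ x in K, f p x ∂μ :=
  contDiff_one_iff_hasFDerivAt.2 ⟨_,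
    continuous_parametric_integral_of_continuous (continuous_fderiv_left hf) hK,
    hasFDerivAt_setIntegral hK hf⟩

lemma hasFDerivAt_intervalIntegral {f : P → ℝ → F} (hf : ContDiff ℝ 1 ↿f) (a b : ℝ) (p : P) :
    HasFDerivAt (fun q => ∫ s in a..b, f q s) (∫ s in a..b, fderiv ℝ (f · s) p) p := by
  simp only [intervalIntegral.intervalIntegral_eq_integral_uIoc, Set.uIoc,
    ← integral_Icc_eq_integral_Ioc]
  exact (hasFDerivAt_setIntegral isCompact_Icc hf p).const_smul _

lemma hasDerivAt_intervalIntegral {f : ℝ → ℝ → F} (hf : ContDiff ℝ 1 ↿f)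
    {f' : ℝ → F} (a b : ℝ) {t : ℝ} (hf' : ∀ x, HasDerivAt (f · x) (f' x) t) :
    HasDerivAt (fun s => ∫ x in a..b, f s x) (∫ x in a..b, f' x) t := by
  simp only [intervalIntegral.intervalIntegral_eq_integral_uIoc, Set.uIoc,
    ← integral_Icc_eq_integral_Ioc]
  exact (hasDerivAt_setIntegral isCompact_Icc hf hf').const_smul _

lemma contDiff_intervalIntegral {f : P → ℝ → F} (hf : ContDiff ℝ 1 ↿f) (a b : ℝ) :
    ContDiff ℝ 1 fun p => ∫ s in a..b, f p s := by
  simp only [intervalIntegral.intervalIntegral_eq_integral_uIoc, Set.uIoc,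
    ← integral_Icc_eq_integral_Ioc]
  exact (contDiff_setIntegral isCompact_Icc hf).const_smul _

end ParametricIntegral

section Interval

variable {a b : ℝ}

lemma eq_of_hasDerivAt_zero {F : Type*} [NormedAddCommGroup F] [NormedSpace ℝ F] {f : ℝ → F}
    (hf : ∀ t ∈ Set.Icc a b, HasDerivAt f 0 t) {t : ℝ} (ht : t ∈ Set.Icc a b) : f t = f a :=
  constant_of_has_deriv_right_zero (fun s hs => (hf s hs).continuousAt.continuousWithinAt)
    (fun s hs => (hf s (Set.Ico_subset_Icc_self hs)).hasDerivWithinAt) t ht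

lemma sq_intervalIntegral_le (hab : a ≤ b) {u : ℝ → ℝ} (hu : Continuous u) :
    (∫ t in a..b, u t) ^ 2 ≤ (b - a) * ∫ t in a..b, u t ^ 2 := by
  obtain rfl | hlt := hab.eq_or_lt
  · simp
  have hvol : volume (Set.uIoc a b) ≠ 0 := by simp [Set.uIoc_of_le hab, hlt]
  have jensen := (even_two.convexOn_pow (𝕜 := ℝ)).map_set_average_le (μ := volume)
    (by fun_prop) isClosed_univ hvol (by simp [Set.uIoc_of_le hab]) (by simp)
    (hu.intervalIntegrable a b).def' ((hu.pow 2).intervalIntegrable a b).def'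
  have hba : 0 < b - a := sub_pos.2 hlt
  simp only [interval_average_eq_div] at jensen
  field_simp at jensen
  exact jensen

lemma sq_sub_le_integral_sq_deriv {u u' : ℝ → ℝ} (hu' : Continuous u')
    (hderiv : ∀ x, HasDerivAt u (u' x) x) {x y : ℝ} (hx : x ∈ Set.Icc a b)
    (hy : y ∈ Set.Icc a b) : (u x - u y) ^ 2 ≤ (b - a) * ∫ z in a..b, u' z ^ 2 := by
  wlog hyx : y ≤ x generalizing x y
  · rw [sub_sq_comm]
    exact this hy hx (le_of_not_ge hyx)
  have hint (c d : ℝ) : IntervalIntegrable (fun z => u' z ^ 2) volume c d :=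
    (hu'.pow 2).intervalIntegrable c d
  calc (u x - u y) ^ 2
    _ = (∫ z in y..x, u' z) ^ 2 := by
      rw [intervalIntegral.integral_eq_sub_of_hasDerivAt (fun z _ => hderiv z)
        (hu'.intervalIntegrable y x)]
    _ ≤ (x - y) * ∫ z in y..x, u' z ^ 2 := sq_intervalIntegral_le hyx hu'
    _ ≤ (b - a) * ∫ z in a..b, u' z ^ 2 :=
      mul_le_mul (by linarith [hx.2, hy.1])
        (intervalIntegral.integral_mono_interval hy.1 hyx hx.2
          (.of_forall fun z => sq_nonneg (u' z)) (hint a b))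
        (intervalIntegral.integral_nonneg hyx fun z _ => sq_nonneg (u' z))
        (by linarith [hx.1, hx.2])

lemma poincare_unitInterval {u u' : ℝ → ℝ} (hu' : Continuous u')
    (hderiv : ∀ x, HasDerivAt u (u' x) x) :
    ∫ x in (0 : ℝ)..1, u x ^ 2
      ≤ (∫ x in (0 : ℝ)..1, u x) ^ 2 + ∫ x in (0 : ℝ)..1, u' x ^ 2 := by
  have hu : Continuous u := continuous_iff_continuousAt.2 fun x => (hderiv x).continuousAt
  set D := ∫ x in (0 : ℝ)..1, u' x ^ 2
  obtain ⟨y, hy, hmean⟩ := exists_eq_interval_average zero_ne_one hu.continuousOn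
  rw [interval_average_eq_div, sub_zero, div_one] at hmean
  have hy01 : y ∈ Set.Icc (0 : ℝ) 1 := by
    simpa using Set.uIoo_subset_uIcc_self hy
  have hpt (x : ℝ) (hx : x ∈ Set.Icc (0 : ℝ) 1) : u x ^ 2 ≤ 2 * u y * u x + (D - u y ^ 2) := by
    have := sq_sub_le_integral_sq_deriv hu' hderiv hx hy01
    linarith
  calc ∫ x in (0 : ℝ)..1, u x ^ 2
    _ ≤ ∫ x in (0 : ℝ)..1, (2 * u y * u x + (D - u y ^ 2)) :=
      intervalIntegral.integral_mono_on zero_le_one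
        ((hu.pow 2).intervalIntegrable _ _) (Continuous.intervalIntegrable (by fun_prop) _ _) hpt
    _ = (∫ x in (0 : ℝ)..1, u x) ^ 2 + D := by
      rw [intervalIntegral.integral_add (Continuous.intervalIntegrable (by fun_prop) _ _)
        intervalIntegrable_const, intervalIntegral.integral_const_mul,
        intervalIntegral.integral_const, ← hmean, sub_zero, one_smul]
      ring

lemma integral_mul_deriv2_eq_deriv2_mul {φ φ' φ'' f f' f'' : ℝ → ℝ}
    (hφ : ∀ t, HasDerivAt φ (φ' t) t) (hφ' : ∀ t, HasDerivAt φ' (φ'' t) t)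
    (hf : ∀ t, HasDerivAt f (f' t) t) (hf' : ∀ t, HasDerivAt f' (f'' t) t)
    (hφ'' : Continuous φ'') (hf'' : Continuous f'')
    (hφa : φ a = 0) (hφb : φ b = 0) (hφ'a : φ' a = 0) (hφ'b : φ' b = 0) :
    ∫ t in a..b, φ t * f'' t = ∫ t in a..b, φ'' t * f t := by
  have hcφ' : Continuous φ' := continuous_iff_continuousAt.2 fun t => (hφ' t).continuousAt
  have hcf' : Continuous f' := continuous_iff_continuousAt.2 fun t => (hf' t).continuousAt
  rw [intervalIntegral.integral_mul_deriv_eq_deriv_mul (fun t _ => hφ t) (fun t _ => hf' t)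
      (hcφ'.intervalIntegrable a b) (hf''.intervalIntegrable a b),
    intervalIntegral.integral_mul_deriv_eq_deriv_mul (fun t _ => hφ' t) (fun t _ => hf t)
      (hφ''.intervalIntegrable a b) (hcf'.intervalIntegrable a b), hφa, hφb, hφ'a, hφ'b]
  ring

/-- The weight `t²(T - t)²`, which vanishes to second order at both ends of `[0, T]`: testing
against it moves two time derivatives without boundary terms. -/
def timeBump (T t : ℝ) : ℝ := t ^ 2 * (T - t) ^ 2

lemma continuous_timeBump (T : ℝ) : Continuous (timeBump T) := by
  unfold timeBump
  fun_prop

lemma timeBump_nonneg (T t : ℝ) : 0 ≤ timeBump T t := by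
  unfold timeBump
  positivity

lemma timeBump_le {T t : ℝ} (ht : t ∈ Set.Icc 0 T) : timeBump T t ≤ T ^ 4 / 16 := by
  have hprod : 0 ≤ t * (T - t) := mul_nonneg ht.1 (sub_nonneg.2 ht.2)
  calc timeBump T t = (t * (T - t)) ^ 2 := by rw [timeBump, mul_pow]
    _ ≤ (T ^ 2 / 4) ^ 2 := pow_le_pow_left₀ hprod (by nlinarith [sq_nonneg (T - 2 * t)]) 2
    _ = T ^ 4 / 16 := by ring

lemma integral_timeBump (T : ℝ) : ∫ t in (0 : ℝ)..T, timeBump T t = T ^ 5 / 30 := by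
  have hexpand (t : ℝ) : timeBump T t = T ^ 2 * t ^ 2 - 2 * T * t ^ 3 + t ^ 4 := by
    unfold timeBump
    ring
  simp only [hexpand]
  rw [intervalIntegral.integral_add (Continuous.intervalIntegrable (by fun_prop) _ _)
      (Continuous.intervalIntegrable (by fun_prop) _ _),
    intervalIntegral.integral_sub (Continuous.intervalIntegrable (by fun_prop) _ _)
      (Continuous.intervalIntegrable (by fun_prop) _ _),
    intervalIntegral.integral_const_mul, intervalIntegral.integral_const_mul,
    integral_pow, integral_pow, integral_pow]
  push_cast
  ring

lemma integral_timeBump_mul_deriv2_le {T : ℝ} (hT : 0 ≤ T) {f f' f'' : ℝ → ℝ}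
    (hf : ∀ t, HasDerivAt f (f' t) t) (hf' : ∀ t, HasDerivAt f' (f'' t) t)
    (hf'' : Continuous f'') (hf0 : ∀ t ∈ Set.Icc 0 T, 0 ≤ f t) :
    ∫ t in (0 : ℝ)..T, timeBump T t * f'' t ≤ 2 * T ^ 2 * ∫ t in (0 : ℝ)..T, f t := by
  have hcf : Continuous f := continuous_iff_continuousAt.2 fun t => (hf t).continuousAt
  have hφ (t : ℝ) : HasDerivAt (timeBump T) (2 * t * (T - t) ^ 2 - 2 * t ^ 2 * (T - t)) t :=
    (((hasDerivAt_id t).pow 2).mul (((hasDerivAt_id t).const_sub T).pow 2)).congr_deriv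
      (by
        simp only [Nat.cast_ofNat, id_eq, Nat.add_one_sub_one, pow_one, mul_one, Pi.pow_apply,
          mul_neg]
        ring)
  have hφ' (t : ℝ) : HasDerivAt (fun t => 2 * t * (T - t) ^ 2 - 2 * t ^ 2 * (T - t))
      (2 * T ^ 2 - 12 * (t * (T - t))) t :=
    ((((hasDerivAt_id t).const_mul 2).mul (((hasDerivAt_id t).const_sub T).pow 2)).sub
      ((((hasDerivAt_id t).pow 2).const_mul 2).mul ((hasDerivAt_id t).const_sub T))).congr_deriv
      (by
        simp only [mul_one, id_eq, Pi.pow_apply, Nat.cast_ofNat, Nat.add_one_sub_one, pow_one,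
          mul_neg]
        ring)
  rw [integral_mul_deriv2_eq_deriv2_mul hφ hφ' hf hf' (by fun_prop) hf'' (by simp [timeBump])
    (by simp [timeBump]) (by simp) (by simp), ← intervalIntegral.integral_const_mul]
  refine intervalIntegral.integral_mono_on hT (Continuous.intervalIntegrable (by fun_prop) _ _)
    (Continuous.intervalIntegrable (by fun_prop) _ _) fun t ht => ?_
  have hprod : 0 ≤ t * (T - t) := mul_nonneg ht.1 (sub_nonneg.2 ht.2)
  exact mul_le_mul_of_nonneg_right (by linarith) (hf0 t ht)

end Interval

section Torus

lemma isCompact_unitSq : IsCompact unitSq := isCompact_Icc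

lemma integrableOn_unitSq {g : V2 → ℝ} (hg : Continuous g) : IntegrableOn g unitSq :=
  hg.continuousOn.integrableOn_compact isCompact_unitSq

lemma intT2_add {f g : V2 → ℝ} (hf : Continuous f) (hg : Continuous g) :
    intT2 (fun x => f x + g x) = intT2 f + intT2 g :=
  integral_add (integrableOn_unitSq hf) (integrableOn_unitSq hg)

lemma intT2_sub {f g : V2 → ℝ} (hf : Continuous f) (hg : Continuous g) :
    intT2 (fun x => f x - g x) = intT2 f - intT2 g :=
  integral_sub (integrableOn_unitSq hf) (integrableOn_unitSq hg)

lemma intT2_const_mul (a : ℝ) (g : V2 → ℝ) : intT2 (fun x => a * g x) = a * intT2 g :=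
  integral_const_mul a g

lemma intT2_nonneg {g : V2 → ℝ} (h : ∀ x, 0 ≤ g x) : 0 ≤ intT2 g :=
  integral_nonneg h

lemma contDiff_intT2 {f : ℝ → V2 → ℝ} (hf : ContDiff ℝ 1 ↿f) :
    ContDiff ℝ 1 fun t => intT2 (f t) :=
  contDiff_setIntegral isCompact_unitSq hf

lemma hasDerivAt_intT2 {f : ℝ → V2 → ℝ} (hf : ContDiff ℝ 1 ↿f) {f' : V2 → ℝ} {t : ℝ}
    (hf' : ∀ x, HasDerivAt (f · x) (f' x) t) :
    HasDerivAt (fun s => intT2 (f s)) (intT2 f') t :=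
  hasDerivAt_setIntegral isCompact_unitSq hf hf'

lemma intervalIntegral_intT2_swap {f : ℝ → V2 → ℝ} (hf : Continuous ↿f) (a b : ℝ) :
    ∫ t in a..b, intT2 (f t) = intT2 fun x => ∫ t in a..b, f t x := by
  refine intervalIntegral_integral_swap ?_
  rw [Measure.prod_restrict]
  exact (hf.continuousOn.integrableOn_compact (isCompact_uIcc.prod isCompact_unitSq)).mono_set
    (Set.prod_mono Set.uIoc_subset_uIcc subset_rfl)

lemma intT2_eq_iterated {g : V2 → ℝ} (hg : Continuous g) :
    intT2 g = ∫ y in (0 : ℝ)..1, ∫ x in (0 : ℝ)..1, g (x, y) := by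
  have hsq : unitSq = Set.Icc (0 : ℝ) 1 ×ˢ Set.Icc (0 : ℝ) 1 := (Set.Icc_prod_Icc ..).symm
  have hint := integrableOn_unitSq hg
  rw [hsq, Measure.volume_eq_prod] at hint
  rw [intT2, hsq, Measure.volume_eq_prod, ← setIntegral_prod_swap]
  refine (setIntegral_prod _ hint.swap).trans ?_
  simp only [intervalIntegral.integral_of_le zero_le_one, integral_Icc_eq_integral_Ioc,
    Function.comp_apply, Prod.swap_prod_mk]

lemma intT2_le_intT2_fderiv_fst {g : V2 → ℝ} (hg : ContDiff ℝ 1 g) :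
    intT2 (fun x => g x ^ 2) ≤ (∫ y in (0 : ℝ)..1, (∫ x in (0 : ℝ)..1, g (x, y)) ^ 2)
      + intT2 fun x => fderiv ℝ g x (1, 0) ^ 2 := by
  have hgc := hg.continuous
  have : Continuous fun x => fderiv ℝ g x (1, 0) :=
    (hg.continuous_fderiv one_ne_zero).clm_apply continuous_const
  rw [intT2_eq_iterated (by fun_prop), intT2_eq_iterated (by fun_prop),
    ← intervalIntegral.integral_add (Continuous.intervalIntegrable (by fun_prop) _ _)
      (Continuous.intervalIntegrable (by fun_prop) _ _)]
  refine intervalIntegral.integral_mono_on zero_le_one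
    (Continuous.intervalIntegrable (by fun_prop) _ _)
    (Continuous.intervalIntegrable (by fun_prop) _ _) fun y _ => ?_
  refine poincare_unitInterval (by fun_prop) fun x => ?_
  have hslice : HasDerivAt (fun z => (z, y)) ((1, 0) : V2) x :=
    (hasDerivAt_id x).prodMk (hasDerivAt_const x y)
  exact (hg.differentiable one_ne_zero (x, y)).hasFDerivAt.comp_hasDerivAt x hslice

lemma integral_sq_integral_le_intT2_fderiv_snd {g : V2 → ℝ} (hg : ContDiff ℝ 1 g)
    (hmean : intT2 g = 0) :
    ∫ y in (0 : ℝ)..1, (∫ x in (0 : ℝ)..1, g (x, y)) ^ 2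
      ≤ intT2 fun x => fderiv ℝ g x (0, 1) ^ 2 := by
  have hg' : Continuous fun x => fderiv ℝ g x (0, 1) :=
    (hg.continuous_fderiv one_ne_zero).clm_apply continuous_const
  have hderiv (y : ℝ) : HasDerivAt (fun z => ∫ x in (0 : ℝ)..1, g (x, z))
      (∫ x in (0 : ℝ)..1, fderiv ℝ g (x, y) (0, 1)) y := by
    refine hasDerivAt_intervalIntegral (f := fun z x => g (x, z))
      (hg.comp (contDiff_snd.prodMk contDiff_fst)) 0 1 fun x => ?_
    have hslice : HasDerivAt (fun z => (x, z)) ((0, 1) : V2) y :=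
      (hasDerivAt_const y x).prodMk (hasDerivAt_id y)
    exact (hg.differentiable one_ne_zero (x, y)).hasFDerivAt.comp_hasDerivAt y hslice
  rw [intT2_eq_iterated hg.continuous] at hmean
  calc ∫ y in (0 : ℝ)..1, (∫ x in (0 : ℝ)..1, g (x, y)) ^ 2
    _ ≤ ∫ y in (0 : ℝ)..1, (∫ x in (0 : ℝ)..1, fderiv ℝ g (x, y) (0, 1)) ^ 2 := by
      simpa [hmean] using poincare_unitInterval
        (u' := fun y => ∫ x in (0 : ℝ)..1, fderiv ℝ g (x, y) (0, 1)) (by fun_prop) hderiv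
    _ ≤ ∫ y in (0 : ℝ)..1, ∫ x in (0 : ℝ)..1, fderiv ℝ g (x, y) (0, 1) ^ 2 := by
      refine intervalIntegral.integral_mono_on zero_le_one
        (Continuous.intervalIntegrable (by fun_prop) _ _)
        (Continuous.intervalIntegrable (by fun_prop) _ _) fun y _ => ?_
      simpa using sq_intervalIntegral_le zero_le_one (u := fun x => fderiv ℝ g (x, y) (0, 1))
        (by fun_prop)
    _ = intT2 fun x => fderiv ℝ g x (0, 1) ^ 2 := by
      rw [intT2_eq_iterated (by fun_prop)]

lemma poincare_unitSq {g : V2 → ℝ} (hg : ContDiff ℝ 1 g) (hmean : intT2 g = 0) :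
    intT2 (fun x => g x ^ 2)
      ≤ intT2 fun x => fderiv ℝ g x (1, 0) ^ 2 + fderiv ℝ g x (0, 1) ^ 2 := by
  have hg' (v : V2) : Continuous fun x => fderiv ℝ g x v ^ 2 :=
    ((hg.continuous_fderiv one_ne_zero).clm_apply continuous_const).pow 2
  rw [intT2_add (hg' _) (hg' _), add_comm]
  exact (intT2_le_intT2_fderiv_fst hg).trans
    (add_le_add_left (integral_sq_integral_le_intT2_fderiv_snd hg hmean) _)

/-- The scalar curl `∂₁E₂ - ∂₂E₁` of a planar vector field. -/
def curl (E : V2 → V2) (x : V2) : ℝ :=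
  (fderiv ℝ E x (1, 0)).2 - (fderiv ℝ E x (0, 1)).1

/-- The vector curl `(∂₂b, -∂₁b)` of a scalar field, the formal adjoint of `curl`. -/
def curlScalar (b : V2 → ℝ) (x : V2) : V2 :=
  (fderiv ℝ b x (0, 1), -fderiv ℝ b x (1, 0))

lemma continuous_curl {E : V2 → V2} (hE : ContDiff ℝ 1 E) : Continuous (curl E) := by
  have := hE.continuous_fderiv one_ne_zero
  unfold curl
  fun_prop

lemma continuous_curlScalar {b : V2 → ℝ} (hb : ContDiff ℝ 1 b) : Continuous (curlScalar b) := by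
  have := hb.continuous_fderiv one_ne_zero
  unfold curlScalar
  fun_prop

lemma intT2_curl_eq_zero {E : V2 → V2} (hE : ContDiff ℝ 1 E) (hper : Zper E) :
    intT2 (curl E) = 0 := by
  have hderiv (x : V2) := (hE.differentiable one_ne_zero x).hasFDerivAt
  have hcont := hE.continuous
  have hright (y : ℝ) : E (1, y) = E (0, y) := by simpa using hper (0, y) 1 0
  have htop (x : ℝ) : E (x, 1) = E (x, 0) := by simpa using hper (x, 0) 0 1
  have hdiv := integral_divergence_prod_Icc_of_hasFDerivAt_of_le (fun x => (E x).2)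
    (fun x => -(E x).1) _ _ (0, 0) (1, 1) (by simp) (by fun_prop) (by fun_prop)
    (fun x _ => (hderiv x).snd) (fun x _ => (hderiv x).fst.neg)
    (integrableOn_unitSq (continuous_curl hE))
  simpa [hright, htop, ← sub_eq_add_neg] using! hdiv

lemma curl_smul {b : V2 → ℝ} {E : V2 → V2} {x : V2} (hb : DifferentiableAt ℝ b x)
    (hE : DifferentiableAt ℝ E x) :
    curl (fun y => b y • E y) x
      = b x * curl E x - ((curlScalar b x).1 * (E x).1 + (curlScalar b x).2 * (E x).2) := by
  simp only [curl, curlScalar, fderiv_fun_smul hb hE, add_apply,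
    smul_apply, ContinuousLinearMap.smulRight_apply, Prod.fst_add,
    Prod.snd_add, Prod.smul_fst, Prod.smul_snd, smul_eq_mul]
  ring

lemma intT2_mul_curl {b : V2 → ℝ} {E : V2 → V2} (hb : ContDiff ℝ 1 b) (hE : ContDiff ℝ 1 E)
    (hbper : Zper b) (hEper : Zper E) :
    intT2 (fun x => b x * curl E x)
      = intT2 fun x => (curlScalar b x).1 * (E x).1 + (curlScalar b x).2 * (E x).2 := by
  have hbc := hb.continuous
  have hEc := hE.continuous
  have := continuous_curlScalar hb
  have hE' := continuous_curl hE
  have hper : Zper fun x => b x • E x := fun x m n => by simp only [hbper x m n, hEper x m n]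
  rw [← sub_eq_zero, ← intT2_sub (by fun_prop) (by fun_prop),
    ← intT2_curl_eq_zero (hb.smul hE) hper]
  congr 1 with x
  exact (curl_smul (hb.differentiable one_ne_zero x) (hE.differentiable one_ne_zero x)).symm

end Torus

section TimePrimitive

/-- The time primitive `∫_{t₀}^t g(s, ·) ds` of a field: a potential vanishing at time `t₀`. -/
def timePrimitive {X : Type*} (t₀ : ℝ) (g : ℝ → X → ℝ) (t : ℝ) (x : X) : ℝ :=
  ∫ s in t₀..t, g s x

variable {X : Type*} {g : ℝ → X → ℝ} {t₀ : ℝ}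

lemma hasDerivAt_timePrimitive [TopologicalSpace X] (hg : Continuous ↿g) (t : ℝ) (x : X) :
    HasDerivAt (fun s => timePrimitive t₀ g s x) (g t x) t :=
  ((hg.comp (.prodMk_left x)).integral_hasStrictDerivAt t₀ t).hasDerivAt

variable [NormedAddCommGroup X] [NormedSpace ℝ X] [LocallyCompactSpace X]

lemma contDiff_timePrimitive (hg : ContDiff ℝ 1 ↿g) :
    ContDiff ℝ 1 ↿(timePrimitive t₀ g) := by
  have hrescale : ↿(timePrimitive t₀ g)
      = fun p : ℝ × X => (p.1 - t₀) * ∫ σ in (0 : ℝ)..1, g ((p.1 - t₀) * σ + t₀) p.2 := by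
    funext p
    have h := intervalIntegral.mul_integral_comp_mul_add (a := 0) (b := 1)
      (f := (g · p.2)) (p.1 - t₀) t₀
    simpa using! h.symm
  have hintegrand : ContDiff ℝ 1 ↿(fun (p : ℝ × X) σ => g ((p.1 - t₀) * σ + t₀) p.2) :=
    hg.comp (f := fun q : (ℝ × X) × ℝ => ((q.1.1 - t₀) * q.2 + t₀, q.1.2)) (by fun_prop)
  rw [hrescale]
  exact (contDiff_fst.sub contDiff_const).mul (contDiff_intervalIntegral hintegrand 0 1)

lemma hasFDerivAt_timePrimitive (hg : ContDiff ℝ 1 ↿g) (t : ℝ) (x : X) :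
    HasFDerivAt (timePrimitive t₀ g t) (∫ s in t₀..t, fderiv ℝ (g s) x) x :=
  hasFDerivAt_intervalIntegral (f := fun x s => g s x)
    (hg.comp (contDiff_snd.prodMk contDiff_fst)) t₀ t x

lemma curlScalar_timePrimitive {g : ℝ → V2 → ℝ} (hg : ContDiff ℝ 1 ↿g) (t : ℝ) (x : V2) :
    curlScalar (timePrimitive t₀ g t) x = ∫ s in t₀..t, curlScalar (g s) x := by
  let rot : (V2 →L[ℝ] ℝ) →L[ℝ] V2 :=
    (ContinuousLinearMap.apply ℝ ℝ (0, 1)).prod (-ContinuousLinearMap.apply ℝ ℝ (1, 0))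
  have hcont : Continuous fun s => fderiv ℝ (g s) x :=
    Continuous.fderiv_one hg continuous_const
  have hrot := rot.intervalIntegral_comp_comm (μ := volume) (hcont.intervalIntegrable t₀ t)
  rw [← (hasFDerivAt_timePrimitive hg t x).fderiv] at hrot
  exact hrot.symm

lemma Zper.timePrimitive {g : ℝ → V2 → ℝ} (hg : ∀ t, Zper (g t)) (t : ℝ) :
    Zper (timePrimitive t₀ g t) := fun x m n => by
  simp only [_root_.timePrimitive, hg _ x m n]

lemma intT2_timePrimitive_eq_zero {g : ℝ → V2 → ℝ} (hg : Continuous ↿g) {t : ℝ}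
    (hmean : ∀ s ∈ Set.uIcc t₀ t, intT2 (g s) = 0) : intT2 (timePrimitive t₀ g t) = 0 := by
  refine (intervalIntegral_intT2_swap hg t₀ t).symm.trans ?_
  rw [intervalIntegral.integral_congr hmean, intervalIntegral.integral_zero]

end TimePrimitive

section L2Inner

/-- The `L²(𝕋²)` inner product of two vector fields. -/
def l2Inner (E G : V2 → V2) : ℝ := intT2 fun x => (E x).1 * (G x).1 + (E x).2 * (G x).2

variable {E G H : V2 → V2}

lemma l2Inner_comm (E G : V2 → V2) : l2Inner E G = l2Inner G E := by
  simp only [l2Inner, mul_comm]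

lemma l2Inner_smul_left (a : ℝ) (E G : V2 → V2) : l2Inner (a • E) G = a * l2Inner E G := by
  rw [l2Inner, l2Inner, ← intT2_const_mul]
  simp only [Pi.smul_apply, Prod.smul_fst, Prod.smul_snd, smul_eq_mul, mul_add, mul_assoc]

lemma l2Inner_sub_left (hE : Continuous E) (hG : Continuous G) (hH : Continuous H) :
    l2Inner (E - G) H = l2Inner E H - l2Inner G H := by
  rw [l2Inner, l2Inner, l2Inner, ← intT2_sub (by fun_prop) (by fun_prop)]
  congr 1 with x
  simp only [Pi.sub_apply, Prod.fst_sub, Prod.snd_sub]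
  ring

lemma l2Inner_self (E : V2 → V2) : l2Inner E E = intT2 fun x => (E x).1 ^ 2 + (E x).2 ^ 2 := by
  simp only [l2Inner, sq]

lemma l2Inner_self_nonneg (E : V2 → V2) : 0 ≤ l2Inner E E := by
  rw [l2Inner_self]
  exact intT2_nonneg fun x => by positivity

lemma l2Inner_sub_self (hE : Continuous E) (hG : Continuous G) :
    l2Inner (E - G) (E - G) = l2Inner E E - 2 * l2Inner G E + l2Inner G G := by
  rw [l2Inner_sub_left hE hG (hE.sub hG), l2Inner_comm E, l2Inner_comm G,
    l2Inner_sub_left hE hG hE, l2Inner_sub_left hE hG hG, l2Inner_comm E G]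
  ring

lemma abs_l2Inner_le (hE : Continuous E) (hG : Continuous G) :
    |l2Inner G E| ≤ (l2Inner E E + l2Inner G G) / 2 := by
  have hsub := l2Inner_self_nonneg (E - G)
  have hadd := l2Inner_self_nonneg (E - (-1 : ℝ) • G)
  have hneg := l2Inner_smul_left (-1) G
  rw [l2Inner_sub_self hE hG] at hsub
  rw [l2Inner_sub_self hE (hG.const_smul _), hneg, hneg,
    l2Inner_comm G (_ • _), hneg] at hadd
  rw [abs_le]
  constructor <;> linarith

lemma l2Inner_sub_self_le (hE : Continuous E) (hG : Continuous G) :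
    l2Inner (E - G) (E - G) ≤ 2 * l2Inner E E + 2 * l2Inner G G := by
  rw [l2Inner_sub_self hE hG]
  linarith [neg_le_of_abs_le (abs_l2Inner_le hE hG)]

end L2Inner

section Maxwell

/-- `(E, b)` is a `C¹` periodic solution on `[0, T]` of `∂ₜb = -α curl E`, `∂ₜE = -β curl b`. The
signs of `α` and `β` are free: the system is hyperbolic for `α β < 0` and elliptic for `α β > 0`. -/
structure IsMaxwellSolution (α β T : ℝ) (E : ℝ → V2 → V2) (b : ℝ → V2 → ℝ) : Prop where
  contDiff_E : ContDiff ℝ 1 ↿E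
  contDiff_b : ContDiff ℝ 1 ↿b
  periodic_E : ∀ t, Zper (E t)
  periodic_b : ∀ t, Zper (b t)
  faraday : ∀ t ∈ Set.Icc 0 T, ∀ x, HasDerivAt (b · x) (-α * curl (E t) x) t
  ampere : ∀ t ∈ Set.Icc 0 T, ∀ x, HasDerivAt (E · x) (-β • curlScalar (b t) x) t

/-- The quadratic quantity `‖b‖² - ρ‖E‖²`, conserved along solutions when `ρ = α / β`; for `ρ = -1`
it is the physical energy. -/
def maxwellInvariant (ρ : ℝ) (E : V2 → V2) (b : V2 → ℝ) : ℝ :=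
  intT2 (fun x => b x ^ 2) - ρ * l2Inner E E

namespace IsMaxwellSolution

variable {α β T : ℝ} {E : ℝ → V2 → V2} {b : ℝ → V2 → ℝ}

lemma contDiff_E_slice (h : IsMaxwellSolution α β T E b) (t : ℝ) : ContDiff ℝ 1 (E t) :=
  h.contDiff_E.comp (contDiff_prodMk_right t)

lemma contDiff_b_slice (h : IsMaxwellSolution α β T E b) (t : ℝ) : ContDiff ℝ 1 (b t) :=
  h.contDiff_b.comp (contDiff_prodMk_right t)

lemma continuous_l2Inner_E (h : IsMaxwellSolution α β T E b) :
    Continuous fun t => l2Inner (E t) (E t) := by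
  have hE := h.contDiff_E
  refine (contDiff_intT2 (f := fun t x => (E t x).1 * (E t x).1 + (E t x).2 * (E t x).2)
    ?_).continuous
  exact (hE.fst.mul hE.fst).add (hE.snd.mul hE.snd)

lemma intT2_mul_curl_E (h : IsMaxwellSolution α β T E b)
    {g : V2 → ℝ} (hg : ContDiff ℝ 1 g) (hper : Zper g) (t : ℝ) :
    intT2 (fun x => g x * curl (E t) x) = l2Inner (curlScalar g) (E t) :=
  intT2_mul_curl hg (h.contDiff_E_slice t) hper (h.periodic_E t)

lemma intT2_b_eq (h : IsMaxwellSolution α β T E b) {t : ℝ} (ht : t ∈ Set.Icc 0 T) :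
    intT2 (b t) = intT2 (b 0) := by
  refine eq_of_hasDerivAt_zero (f := fun t => intT2 (b t)) (fun s hs => ?_) ht
  refine (hasDerivAt_intT2 h.contDiff_b (h.faraday s hs)).congr_deriv ?_
  rw [intT2_const_mul, intT2_curl_eq_zero (h.contDiff_E_slice s) (h.periodic_E s), mul_zero]

lemma hasDerivAt_intT2_b_sq (h : IsMaxwellSolution α β T E b) {t : ℝ} (ht : t ∈ Set.Icc 0 T) :
    HasDerivAt (fun s => intT2 fun x => b s x ^ 2)
      (-(2 * α) * l2Inner (curlScalar (b t)) (E t)) t := by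
  rw [← h.intT2_mul_curl_E (h.contDiff_b_slice t) (h.periodic_b t), ← intT2_const_mul]
  have hsq : ContDiff ℝ 1 ↿(fun s x => b s x ^ 2) := h.contDiff_b.pow 2
  refine hasDerivAt_intT2 hsq fun x => ((h.faraday t ht x).pow 2).congr_deriv ?_
  push_cast
  ring

lemma hasDerivAt_l2Inner_E (h : IsMaxwellSolution α β T E b) {t : ℝ} (ht : t ∈ Set.Icc 0 T) :
    HasDerivAt (fun s => l2Inner (E s) (E s))
      (-(2 * β) * l2Inner (curlScalar (b t)) (E t)) t := by
  have hE := h.contDiff_E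
  rw [l2Inner, ← intT2_const_mul]
  refine hasDerivAt_intT2 (f := fun s x => (E s x).1 * (E s x).1 + (E s x).2 * (E s x).2)
    ((hE.fst.mul hE.fst).add (hE.snd.mul hE.snd)) fun x => ?_
  have h1 := hasFDerivAt_fst.comp_hasDerivAt t (h.ampere t ht x)
  have h2 := hasFDerivAt_snd.comp_hasDerivAt t (h.ampere t ht x)
  refine ((h1.mul h1).add (h2.mul h2)).congr_deriv ?_
  simp only [Function.comp_apply, ContinuousLinearMap.coe_fst', ContinuousLinearMap.coe_snd',
    Prod.smul_fst, Prod.smul_snd, smul_eq_mul]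
  ring

lemma maxwellInvariant_eq (h : IsMaxwellSolution α β T E b) (hβ : β ≠ 0) {t : ℝ}
    (ht : t ∈ Set.Icc 0 T) :
    maxwellInvariant (α / β) (E t) (b t) = maxwellInvariant (α / β) (E 0) (b 0) := by
  refine eq_of_hasDerivAt_zero (f := fun t => maxwellInvariant (α / β) (E t) (b t))
    (fun s hs => ?_) ht
  refine ((h.hasDerivAt_intT2_b_sq hs).sub
    ((h.hasDerivAt_l2Inner_E hs).const_mul (α / β))).congr_deriv ?_
  field_simp
  ring

lemma E_sub_E_eq (h : IsMaxwellSolution α β T E b)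
    {t₀ t : ℝ} (ht₀ : t₀ ∈ Set.Icc 0 T) (ht : t ∈ Set.Icc 0 T) :
    E t - E t₀ = -β • curlScalar (timePrimitive t₀ b t) := by
  funext x
  have hcont : Continuous fun s => fderiv ℝ (b s) x :=
    Continuous.fderiv_one h.contDiff_b continuous_const
  have hcurl : Continuous fun s => -β • curlScalar (b s) x := by
    unfold curlScalar
    fun_prop
  rw [Pi.sub_apply, Pi.smul_apply, curlScalar_timePrimitive h.contDiff_b,
    ← intervalIntegral.integral_smul]
  exact (intervalIntegral.integral_eq_sub_of_hasDerivAt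
    (fun s hs => h.ampere s (Set.uIcc_subset_Icc ht₀ ht hs) x)
    (hcurl.intervalIntegrable t₀ t)).symm

lemma curlScalar_timePrimitive_b (h : IsMaxwellSolution α β T E b)
    (hβ : β ≠ 0) {t₀ t : ℝ} (ht₀ : t₀ ∈ Set.Icc 0 T) (ht : t ∈ Set.Icc 0 T) :
    curlScalar (timePrimitive t₀ b t) = (-β)⁻¹ • (E t - E t₀) := by
  rw [h.E_sub_E_eq ht₀ ht, inv_smul_smul₀ (neg_ne_zero.2 hβ)]

lemma contDiff_timePrimitive_b_slice (h : IsMaxwellSolution α β T E b) (t₀ t : ℝ) :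
    ContDiff ℝ 1 (timePrimitive t₀ b t) :=
  (contDiff_timePrimitive h.contDiff_b).comp (contDiff_prodMk_right t)

lemma intT2_timePrimitive_b_sq_le (h : IsMaxwellSolution α β T E b)
    (hβ : β ≠ 0) (hmean : intT2 (b 0) = 0) {t₀ t : ℝ}
    (ht₀ : t₀ ∈ Set.Icc 0 T) (ht : t ∈ Set.Icc 0 T) :
    intT2 (fun x => timePrimitive t₀ b t x ^ 2)
      ≤ 2 / β ^ 2 * (l2Inner (E t) (E t) + l2Inner (E t₀) (E t₀)) := by
  have hmeanF : intT2 (timePrimitive t₀ b t) = 0 :=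
    intT2_timePrimitive_eq_zero h.contDiff_b.continuous fun s hs =>
      (h.intT2_b_eq (Set.uIcc_subset_Icc ht₀ ht hs)).trans hmean
  calc intT2 (fun x => timePrimitive t₀ b t x ^ 2)
    _ ≤ l2Inner (curlScalar (timePrimitive t₀ b t)) (curlScalar (timePrimitive t₀ b t)) := by
      rw [l2Inner_self]
      simpa only [curlScalar, neg_sq, add_comm] using
        poincare_unitSq (h.contDiff_timePrimitive_b_slice t₀ t) hmeanF
    _ = (β ^ 2)⁻¹ * l2Inner (E t - E t₀) (E t - E t₀) := by
      rw [h.curlScalar_timePrimitive_b hβ ht₀ ht, l2Inner_smul_left, l2Inner_comm,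
        l2Inner_smul_left]
      field_simp
    _ ≤ (β ^ 2)⁻¹ * (2 * l2Inner (E t) (E t) + 2 * l2Inner (E t₀) (E t₀)) := by
      gcongr
      exact l2Inner_sub_self_le (h.contDiff_E_slice t).continuous (h.contDiff_E_slice t₀).continuous
    _ = 2 / β ^ 2 * (l2Inner (E t) (E t) + l2Inner (E t₀) (E t₀)) := by ring

lemma hasDerivAt_intT2_timePrimitive_b_mul (h : IsMaxwellSolution α β T E b)
    (hβ : β ≠ 0) {t₀ t : ℝ} (ht₀ : t₀ ∈ Set.Icc 0 T) (ht : t ∈ Set.Icc 0 T) :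
    HasDerivAt (fun s => intT2 fun x => timePrimitive t₀ b s x * b s x)
      (maxwellInvariant (α / β) (E t) (b t)
        + α / β * (2 * l2Inner (E t) (E t) - l2Inner (E t₀) (E t))) t := by
  have hF := contDiff_timePrimitive (t₀ := t₀) h.contDiff_b
  have hFt := h.contDiff_timePrimitive_b_slice t₀ t
  have hFc := hFt.continuous
  have hbc := (h.contDiff_b_slice t).continuous
  have hEc (s : ℝ) := (h.contDiff_E_slice s).continuous
  have hcurl := continuous_curl (h.contDiff_E_slice t)
  have hmul : ContDiff ℝ 1 ↿(fun s x => timePrimitive t₀ b s x * b s x) := hF.mul h.contDiff_b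
  refine (hasDerivAt_intT2 hmul fun x =>
    (hasDerivAt_timePrimitive h.contDiff_b.continuous t x).mul (h.faraday t ht x)).congr_deriv ?_
  calc intT2 (fun x => b t x * b t x + timePrimitive t₀ b t x * (-α * curl (E t) x))
    _ = intT2 (fun x => b t x ^ 2 + -α * (timePrimitive t₀ b t x * curl (E t) x)) := by
      congr 1 with x
      ring
    _ = intT2 (fun x => b t x ^ 2)
        + -α * l2Inner (curlScalar (timePrimitive t₀ b t)) (E t) := by
      rw [intT2_add (by fun_prop) (by fun_prop), intT2_const_mul,
        h.intT2_mul_curl_E hFt (.timePrimitive h.periodic_b t)]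
    _ = _ := by
      rw [h.curlScalar_timePrimitive_b hβ ht₀ ht, l2Inner_smul_left,
        l2Inner_sub_left (hEc t) (hEc t₀) (hEc t), maxwellInvariant]
      field_simp
      ring

lemma contDiff_intT2_timePrimitive_b_sq (h : IsMaxwellSolution α β T E b) (t₀ : ℝ) :
    ContDiff ℝ 1 fun t => intT2 fun x => timePrimitive t₀ b t x ^ 2 := by
  have hF := contDiff_timePrimitive (t₀ := t₀) h.contDiff_b
  exact contDiff_intT2 (f := fun t x => timePrimitive t₀ b t x ^ 2) (hF.pow 2)

lemma contDiff_intT2_timePrimitive_b_mul (h : IsMaxwellSolution α β T E b) (t₀ : ℝ) :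
    ContDiff ℝ 1 fun t => intT2 fun x => timePrimitive t₀ b t x * b t x := by
  have hF := contDiff_timePrimitive (t₀ := t₀) h.contDiff_b
  exact contDiff_intT2 (f := fun t x => timePrimitive t₀ b t x * b t x) (hF.mul h.contDiff_b)

lemma hasDerivAt_half_intT2_timePrimitive_b_sq (h : IsMaxwellSolution α β T E b) (t₀ t : ℝ) :
    HasDerivAt (fun s => 1 / 2 * intT2 fun x => timePrimitive t₀ b s x ^ 2)
      (intT2 fun x => timePrimitive t₀ b t x * b t x) t := by
  have hF := contDiff_timePrimitive (t₀ := t₀) h.contDiff_b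
  have hsq : ContDiff ℝ 1 ↿(fun s x => timePrimitive t₀ b s x ^ 2) := hF.pow 2
  have hderiv := hasDerivAt_intT2 hsq fun x =>
    (hasDerivAt_timePrimitive h.contDiff_b.continuous t x).pow 2
  refine (hderiv.const_mul (1 / 2)).congr_deriv ?_
  rw [← intT2_const_mul]
  congr 1 with x
  push_cast
  ring

lemma integral_timeBump_mul_deriv_le (h : IsMaxwellSolution α β T E b)
    (hβ : β ≠ 0) (hT : 0 ≤ T) (hmean : intT2 (b 0) = 0) {t₀ : ℝ} (ht₀ : t₀ ∈ Set.Icc 0 T) :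
    ∫ t in (0 : ℝ)..T,
        timeBump T t * deriv (fun s => intT2 fun x => timePrimitive t₀ b s x * b s x) t
      ≤ 2 * T ^ 2 / β ^ 2 * ((∫ t in (0 : ℝ)..T, l2Inner (E t) (E t))
          + T * l2Inner (E t₀) (E t₀)) := by
  have hEc := h.continuous_l2Inner_E
  have hsq := (h.contDiff_intT2_timePrimitive_b_sq t₀).continuous
  have hmul := h.contDiff_intT2_timePrimitive_b_mul t₀
  calc ∫ t in (0 : ℝ)..T,
        timeBump T t * deriv (fun s => intT2 fun x => timePrimitive t₀ b s x * b s x) t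
    _ ≤ 2 * T ^ 2 * ∫ t in (0 : ℝ)..T, 1 / 2 * intT2 fun x => timePrimitive t₀ b t x ^ 2 :=
      integral_timeBump_mul_deriv2_le hT (h.hasDerivAt_half_intT2_timePrimitive_b_sq t₀)
        (fun t => (hmul.differentiable one_ne_zero t).hasDerivAt) (hmul.continuous_deriv le_rfl)
        fun t _ => mul_nonneg (by norm_num) (intT2_nonneg fun x => sq_nonneg _)
    _ ≤ 2 * T ^ 2 * ∫ t in (0 : ℝ)..T,
        1 / β ^ 2 * (l2Inner (E t) (E t) + l2Inner (E t₀) (E t₀)) := by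
      gcongr
      refine intervalIntegral.integral_mono_on hT
        (Continuous.intervalIntegrable (by fun_prop) _ _)
        (Continuous.intervalIntegrable (by fun_prop) _ _) fun t ht => ?_
      linear_combination 1 / 2 * h.intT2_timePrimitive_b_sq_le hβ hmean ht₀ ht
    _ = _ := by
      rw [intervalIntegral.integral_const_mul, intervalIntegral.integral_add
        (hEc.intervalIntegrable _ _) intervalIntegrable_const, intervalIntegral.integral_const,
        smul_eq_mul, sub_zero]
      ring

lemma timeBump_mul_maxwellInvariant_le (h : IsMaxwellSolution α β T E b)
    (hβ : β ≠ 0) {t₀ t : ℝ} (ht₀ : t₀ ∈ Set.Icc 0 T) (ht : t ∈ Set.Icc 0 T) :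
    timeBump T t * maxwellInvariant (α / β) (E t) (b t)
      ≤ timeBump T t * deriv (fun s => intT2 fun x => timePrimitive t₀ b s x * b s x) t
        + 5 * T ^ 4 / 32 * |α / β| * (l2Inner (E t) (E t) + l2Inner (E t₀) (E t₀)) := by
  have hE0 := l2Inner_self_nonneg (E t)
  have hE0' := l2Inner_self_nonneg (E t₀)
  have hcross := abs_l2Inner_le (h.contDiff_E_slice t).continuous
    (h.contDiff_E_slice t₀).continuous
  have herror : |α / β * (2 * l2Inner (E t) (E t) - l2Inner (E t₀) (E t))|
      ≤ |α / β| * (5 / 2 * (l2Inner (E t) (E t) + l2Inner (E t₀) (E t₀))) := by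
    rw [abs_mul]
    gcongr
    rw [abs_le] at hcross ⊢
    constructor <;> linarith
  have hbump := mul_le_mul (timeBump_le ht) herror (abs_nonneg _) (by positivity)
  have hneg := mul_le_mul_of_nonneg_left (neg_abs_le
    (α / β * (2 * l2Inner (E t) (E t) - l2Inner (E t₀) (E t)))) (timeBump_nonneg T t)
  rw [(h.hasDerivAt_intT2_timePrimitive_b_mul hβ ht₀ ht).deriv]
  linarith

lemma integral_timeBump_mul_maxwellInvariant_le (h : IsMaxwellSolution α β T E b)
    (hβ : β ≠ 0) (hT : 0 ≤ T) (hmean : intT2 (b 0) = 0) {t₀ : ℝ} (ht₀ : t₀ ∈ Set.Icc 0 T) :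
    T ^ 5 / 30 * maxwellInvariant (α / β) (E 0) (b 0)
      ≤ (2 * T ^ 2 / β ^ 2 + 5 * T ^ 4 / 32 * |α / β|)
        * ((∫ t in (0 : ℝ)..T, l2Inner (E t) (E t)) + T * l2Inner (E t₀) (E t₀)) := by
  set K := maxwellInvariant (α / β) (E 0) (b 0)
  set f'' := deriv fun s => intT2 fun x => timePrimitive t₀ b s x * b s x
  set e := fun t => l2Inner (E t) (E t)
  have hf'' : Continuous f'' :=
    (h.contDiff_intT2_timePrimitive_b_mul t₀).continuous_deriv le_rfl
  have he : Continuous e := h.continuous_l2Inner_E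
  have hbump := continuous_timeBump T
  calc T ^ 5 / 30 * K
    _ = ∫ t in (0 : ℝ)..T, timeBump T t * K := by
      rw [intervalIntegral.integral_mul_const, integral_timeBump]
    _ ≤ ∫ t in (0 : ℝ)..T, (timeBump T t * f'' t + 5 * T ^ 4 / 32 * |α / β| * (e t + e t₀)) := by
      refine intervalIntegral.integral_mono_on hT
        (Continuous.intervalIntegrable (by fun_prop) _ _)
        (Continuous.intervalIntegrable (by fun_prop) _ _) fun t ht => ?_
      simpa only [h.maxwellInvariant_eq hβ ht] using h.timeBump_mul_maxwellInvariant_le hβ ht₀ ht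
    _ = (∫ t in (0 : ℝ)..T, timeBump T t * f'' t)
        + 5 * T ^ 4 / 32 * |α / β| * ((∫ t in (0 : ℝ)..T, e t) + T * e t₀) := by
      rw [intervalIntegral.integral_add (Continuous.intervalIntegrable (by fun_prop) _ _)
        (Continuous.intervalIntegrable (by fun_prop) _ _), intervalIntegral.integral_const_mul,
        intervalIntegral.integral_add (he.intervalIntegrable _ _) intervalIntegrable_const,
        intervalIntegral.integral_const, smul_eq_mul, sub_zero]
    _ ≤ _ := by
      rw [add_mul]
      gcongr
      exact h.integral_timeBump_mul_deriv_le hβ hT hmean ht₀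

lemma exists_l2Inner_E_eq_average (h : IsMaxwellSolution α β T E b) (hT : 0 < T) :
    ∃ t₀ ∈ Set.Icc 0 T, T * l2Inner (E t₀) (E t₀) = ∫ t in (0 : ℝ)..T, l2Inner (E t) (E t) := by
  obtain ⟨t₀, ht₀, haverage⟩ :=
    exists_eq_interval_average hT.ne h.continuous_l2Inner_E.continuousOn
  refine ⟨t₀, by simpa [hT.le] using Set.uIoo_subset_uIcc_self ht₀, ?_⟩
  rw [haverage, interval_average_eq_div, sub_zero, mul_div_cancel₀ _ hT.ne']

lemma maxwellInvariant_le (h : IsMaxwellSolution α β T E b)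
    (hβ : β ≠ 0) (hT : 0 < T) (hmean : intT2 (b 0) = 0) :
    T * maxwellInvariant (α / β) (E 0) (b 0)
      ≤ (120 / (β * T) ^ 2 + 75 / 8 * |α / β|) * ∫ t in (0 : ℝ)..T, l2Inner (E t) (E t) := by
  obtain ⟨t₀, ht₀, haverage⟩ := h.exists_l2Inner_E_eq_average hT
  have htested := h.integral_timeBump_mul_maxwellInvariant_le hβ hT.le hmean ht₀
  rw [haverage] at htested
  set K := maxwellInvariant (α / β) (E 0) (b 0)
  set Q := ∫ t in (0 : ℝ)..T, l2Inner (E t) (E t)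
  calc T * K
    _ = 30 / T ^ 4 * (T ^ 5 / 30 * K) := by field_simp
    _ ≤ 30 / T ^ 4 * ((2 * T ^ 2 / β ^ 2 + 5 * T ^ 4 / 32 * |α / β|) * (Q + Q)) := by gcongr
    _ = (120 / (β * T) ^ 2 + 75 / 8 * |α / β|) * Q := by
      field_simp
      ring

lemma integral_b_sq_eq (h : IsMaxwellSolution α β T E b) (hβ : β ≠ 0) (hT : 0 ≤ T) :
    ∫ t in (0 : ℝ)..T, intT2 (fun x => b t x ^ 2)
      = T * maxwellInvariant (α / β) (E 0) (b 0)
        + α / β * ∫ t in (0 : ℝ)..T, l2Inner (E t) (E t) := by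
  have hEc := h.continuous_l2Inner_E
  calc ∫ t in (0 : ℝ)..T, intT2 (fun x => b t x ^ 2)
    _ = ∫ t in (0 : ℝ)..T,
        (maxwellInvariant (α / β) (E 0) (b 0) + α / β * l2Inner (E t) (E t)) := by
      refine intervalIntegral.integral_congr fun t ht => ?_
      rw [Set.uIcc_of_le hT] at ht
      rw [← h.maxwellInvariant_eq hβ ht, maxwellInvariant, sub_add_cancel]
    _ = _ := by
      rw [intervalIntegral.integral_add intervalIntegrable_const
        (Continuous.intervalIntegrable (by fun_prop) _ _), intervalIntegral.integral_const,
        intervalIntegral.integral_const_mul, smul_eq_mul, sub_zero]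

end IsMaxwellSolution

lemma fderiv_slice_apply {P X F : Type*} [NormedAddCommGroup P] [NormedSpace ℝ P]
    [NormedAddCommGroup X] [NormedSpace ℝ X] [NormedAddCommGroup F] [NormedSpace ℝ F]
    {f : P × X → F} {p : P} {x : X} (hf : DifferentiableAt ℝ f (p, x)) (v : X) :
    fderiv ℝ (fun y => f (p, y)) x v = fderiv ℝ f (p, x) (0, v) :=
  DFunLike.congr_fun (hf.hasFDerivAt.comp x (hasFDerivAt_prodMk_right p x)).fderiv v

lemma hasDerivAt_slice {X F : Type*} [NormedAddCommGroup X] [NormedSpace ℝ X]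
    [NormedAddCommGroup F] [NormedSpace ℝ F] {f : ℝ × X → F} {t : ℝ} {x : X}
    (hf : DifferentiableAt ℝ f (t, x)) :
    HasDerivAt (fun s => f (s, x)) (fderiv ℝ f (t, x) (1, 0)) t :=
  hf.hasFDerivAt.comp_hasDerivAt t ((hasDerivAt_id t).prodMk (hasDerivAt_const t x))

lemma IsHomMaxwellSolution.isMaxwellSolution {c T : ℝ} {E : ℝ × V2 → V2} {b : ℝ × V2 → ℝ}
    (h : IsHomMaxwellSolution c T E b) :
    IsMaxwellSolution c c T (fun t x => E (t, x)) (fun t x => b (t, x)) := by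
  obtain ⟨hE, hb, hEper, hbper, heq⟩ := h
  have hE1 : ContDiff ℝ 1 E := hE.of_le (by exact_mod_cast le_top)
  have hb1 : ContDiff ℝ 1 b := hb.of_le (by exact_mod_cast le_top)
  have hEd := hE1.differentiable one_ne_zero
  have hbd := hb1.differentiable one_ne_zero
  have hfst (p v) : fderiv ℝ (fun q => (E q).1) p v = (fderiv ℝ E p v).1 :=
    DFunLike.congr_fun (hEd p).hasFDerivAt.fst.fderiv v
  have hsnd (p v) : fderiv ℝ (fun q => (E q).2) p v = (fderiv ℝ E p v).2 :=
    DFunLike.congr_fun (hEd p).hasFDerivAt.snd.fderiv v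
  simp only [hfst, hsnd] at heq
  refine ⟨hE1, hb1, hEper, hbper, fun t ht x => ?_, fun t ht x => ?_⟩ <;>
    obtain ⟨hfaraday, hampere₁, hampere₂⟩ := heq t ht x
  · refine (hasDerivAt_slice (hbd (t, x))).congr_deriv ?_
    rw [curl, fderiv_slice_apply (hEd _), fderiv_slice_apply (hEd _)]
    linear_combination hfaraday
  · refine (hasDerivAt_slice (hEd (t, x))).congr_deriv ?_
    rw [curlScalar, fderiv_slice_apply (hbd _), fderiv_slice_apply (hbd _), Prod.smul_mk,
      smul_eq_mul, smul_eq_mul]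
    refine Prod.ext ?_ ?_
    · linear_combination hampere₁
    · linear_combination hampere₂

end Maxwell

theorem maxwell_B_controlled_by_E_general {α β T : ℝ} (hβ : β ≠ 0) (hT : 0 < T)
    {E : ℝ → V2 → V2} {b : ℝ → V2 → ℝ} (h : IsMaxwellSolution α β T E b)
    (hmean : intT2 (b 0) = 0) :
    ∫ t in (0 : ℝ)..T, intT2 (fun x => b t x ^ 2)
      ≤ (120 / (β * T) ^ 2 + 11 * |α / β|)
        * ∫ t in (0 : ℝ)..T, intT2 fun x => (E t x).1 ^ 2 + (E t x).2 ^ 2 := by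
  have hE : 0 ≤ ∫ t in (0 : ℝ)..T, l2Inner (E t) (E t) :=
    intervalIntegral.integral_nonneg hT.le fun t _ => l2Inner_self_nonneg (E t)
  have habs := mul_le_mul_of_nonneg_right (le_abs_self (α / β)) hE
  have habs0 := mul_nonneg (abs_nonneg (α / β)) hE
  simp only [← l2Inner_self]
  rw [h.integral_b_sq_eq hβ hT.le]
  linarith [h.maxwellInvariant_le hβ hT hmean]

/-- **The magnetic field is controlled by the electric field for the homogeneous
2D Maxwell equations** (for initial data with `div E(0,·) = 0` and `∫ B(0,·) = 0`). -/
theorem maxwell_B_controlled_by_E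
    (c T : ℝ) (hc : 0 < c) (hT : 0 < T) :
    ∃ C₁ > (0 : ℝ),
      ∀ (E : ℝ × V2 → V2) (b : ℝ × V2 → ℝ),
        IsHomMaxwellSolution c T E b →
        (∀ x, divF (fun y => E (0, y)) x = 0) →
        intT2 (fun x => b (0, x)) = 0 →
        (∫ t in (0 : ℝ)..T, intT2 fun x => (b (t, x)) ^ 2)
          ≤ C₁ * ∫ t in (0 : ℝ)..T, intT2 fun x => (E (t, x)).1 ^ 2 + (E (t, x)).2 ^ 2 :=
  ⟨120 / (c * T) ^ 2 + 11 * |c / c|, by positivity, fun _ _ h _ hmean =>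
    maxwell_B_controlled_by_E_general hc.ne' hT h.isMaxwellSolution hmean⟩

end
end

section
/- Let 𝔟 ∈ ℝ, τ > 0 and M > 0. There exist M̃ > 0, smooth fields ℰ ∈ C^∞([0,τ]×𝕋²; ℝ²) and φ ∈ C^∞([0,τ]×𝕋²; ℝ) (independent of the speed of light), and c₀ > 0, satisfying: ℰ = −∇ₓφ on [0,τ]×(𝕋²∖ℋ_d); supp ℰ ⊂ (0,τ)×𝕋² (ℰ vanishes near t = 0 and t = τ); Δₓφ = 0 on [0,τ]×(𝕋²∖ℋ_d); ∫_𝒟 ∇ₓφ·n dσ = 0 for all t; such that for every c ≥ c₀ and every force F ∈ L^∞(0,τ; W^{1,∞}(𝕋²×ℝ²; ℝ²)) with ‖F‖_{L^∞} ≤ 1, the relativistic characteristics (X,V) associated with the force F + ℰ + 𝔟 v̂⊥ satisfy V(τ,0,x,v) ∈ B(0,M̃) ∖ B(0,M+1) for every (x,v) ∈ 𝕋²×B(0,M). -/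
noncomputable section

open MeasureTheory Real

/-- Spatial gradient of a time-dependent potential. -/
noncomputable def gradx (φ : ℝ × V2 → ℝ) (t : ℝ) (x : V2) : V2 :=
  (fderiv ℝ (fun y => φ (t, y)) x ((1 : ℝ), (0 : ℝ)),
   fderiv ℝ (fun y => φ (t, y)) x ((0 : ℝ), (1 : ℝ)))

/-- Spatial Laplacian of a time-dependent potential. -/
noncomputable def lapx (φ : ℝ × V2 → ℝ) (t : ℝ) (x : V2) : ℝ :=
  fderiv ℝ (fun y => fderiv ℝ (fun z => φ (t, z)) y ((1 : ℝ), (0 : ℝ))) x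
      ((1 : ℝ), (0 : ℝ)) +
    fderiv ℝ (fun y => fderiv ℝ (fun z => φ (t, z)) y ((0 : ℝ), (1 : ℝ))) x
      ((0 : ℝ), (1 : ℝ))

/-- Euclidean inner product on `ℝ²`. -/
def inner2 (a b : V2) : ℝ := a.1 * b.1 + a.2 * b.2

/-- The thickened strip `ℋ_l = ℋ + [−l,l]·n_H` around the periodized line `L`
with unit normal `nH`. -/
def stripAround (L : Set V2) (nH : V2) (l : ℝ) : Set V2 :=
  {x : V2 | ∃ y ∈ L, ∃ s : ℝ, |s| ≤ l ∧ x = y + s • nH}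

/-!
If `k` is an integer vector normal to the line `ℋ` and `ξ`, `η` are the coordinates along `k` and
`k⊥`, then `exp (2πξ) cos (2πη)` is harmonic and its gradient vanishes nowhere, but it is not
periodic. Replacing `ξ` in the exponent by a sawtooth, smoothed in the strip around `ℋ`, makes it
periodic, and the field is the gradient computed as if the sawtooth were a translation everywhere:
it is the true gradient outside the strip and still vanishes nowhere inside. Its flux through a line
parallel to `ℋ` is the integral of a cosine over whole periods.

The field is switched on during a pulse of prescribed impulse `A` and very short duration. As the
momentum stays bounded in terms of `A`, a particle barely moves during the pulse and is pushed in an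
almost constant direction, so it gains a momentum proportional to `A`. The magnetic force does no
work, and the perturbation changes the speed by at most `τ`.
-/

section

open Set Filter Topology
open scoped ContDiff RealInnerProductSpace

section Motion

variable {E F : Type*} [NormedAddCommGroup E] [InnerProductSpace ℝ E]
  [NormedAddCommGroup F] [NormedSpace ℝ F]

-- The speed is not differentiable where it vanishes, so the bound is obtained for the smooth
-- function `√(η² + ‖V‖²)`, which is within `η` of the speed.
lemma abs_norm_sub_norm_le_of_abs_inner_deriv_le {V V' : ℝ → E} {B b : ℝ → ℝ} {s t : ℝ}
    (hst : s ≤ t) (hV : ∀ r ∈ Icc s t, HasDerivAt V (V' r) r) (hB : ∀ r, HasDerivAt B (b r) r)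
    (hb : ∀ r ∈ Icc s t, 0 ≤ b r) (hpower : ∀ r ∈ Icc s t, |⟪V r, V' r⟫| ≤ b r * ‖V r‖) :
    |‖V t‖ - ‖V s‖| ≤ B t - B s := by
  refine le_of_forall_pos_le_add fun η hη => ?_
  set N : ℝ → ℝ := fun r => √(η ^ 2 + ‖V r‖ ^ 2)
  have hNpos (r : ℝ) : 0 < N r := by positivity
  have norm_le (r : ℝ) : ‖V r‖ ≤ N r := Real.le_sqrt_of_sq_le (by nlinarith)
  have le_norm_add (r : ℝ) : N r ≤ ‖V r‖ + η :=
    Real.sqrt_le_iff.2 ⟨by positivity, by nlinarith [norm_nonneg (V r)]⟩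
  have hN' (r : ℝ) (hr : r ∈ Icc s t) : HasDerivAt N (⟪V r, V' r⟫ / N r) r :=
    (((hV r hr).norm_sq.const_add (η ^ 2)).sqrt (by positivity)).congr_deriv
      (mul_div_mul_left _ _ two_ne_zero)
  have hNbound : ∀ r ∈ Ico s t, ‖⟪V r, V' r⟫ / N r‖ ≤ b r := fun r hr => by
    have hr := Ico_subset_Icc_self hr
    rw [norm_div, Real.norm_of_nonneg (hNpos r).le, div_le_iff₀ (hNpos r)]
    exact (hpower r hr).trans (mul_le_mul_of_nonneg_left (norm_le r) (hb r hr))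
  have hNdiff : ‖N t - N s‖ ≤ B t - B s :=
    image_norm_le_of_norm_deriv_right_le_deriv_boundary
      (fun r hr => ((hN' r hr).sub_const _).continuousAt.continuousWithinAt)
      (fun r hr => ((hN' r (Ico_subset_Icc_self hr)).sub_const _).hasDerivWithinAt)
      (by simp) (fun r => (hB r).sub_const _) hNbound (right_mem_Icc.2 hst)
  rw [Real.norm_eq_abs, abs_le] at hNdiff
  rw [abs_le]
  constructor <;> linarith [norm_le s, norm_le t, le_norm_add s, le_norm_add t]

/-- The motion of a particle with position `X` and momentum `V`, moving at speed at most `‖V‖`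
under three forces: a perturbation of norm at most `1`, the field `W` modulated by the amplitude
`a`, and a gyroscopic force, which does no work and is bounded by `β * ‖V‖`. -/
structure IsDrivenMotion (W : F → E) (a : ℝ → ℝ) (β : ℝ) (X : ℝ → F) (V : ℝ → E) : Prop where
  position : ∀ t, ∃ u, ‖u‖ ≤ ‖V t‖ ∧ HasDerivAt X u t
  momentum : ∀ t, ∃ f g, ‖f‖ ≤ 1 ∧ ⟪V t, g⟫ = 0 ∧ ‖g‖ ≤ β * ‖V t‖ ∧
    HasDerivAt V (f + a t • W (X t) + g) t

namespace IsDrivenMotion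

variable {W : F → E} {a B : ℝ → ℝ} {β : ℝ} {X : ℝ → F} {V : ℝ → E} {s t : ℝ}

lemma abs_norm_sub_norm_le (h : IsDrivenMotion W a β X V) {K : ℝ} (hW : ∀ x, ‖W x‖ ≤ K)
    (hB : ∀ r, HasDerivAt B (a r) r) (ha : ∀ r, 0 ≤ a r) (hst : s ≤ t) :
    |‖V t‖ - ‖V s‖| ≤ (t - s) + K * (B t - B s) := by
  choose f g hf hg _ hV using h.momentum
  have hK : 0 ≤ K := (norm_nonneg _).trans (hW (X s))
  refine (abs_norm_sub_norm_le_of_abs_inner_deriv_le (B := fun r => r + K * B r) hst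
    (fun r _ => hV r) (fun r => (hasDerivAt_id r).add ((hB r).const_mul K))
    (fun r _ => by have := ha r; positivity) fun r _ => ?_).trans_eq (by ring)
  have hforce : ‖f r + a r • W (X r)‖ ≤ 1 + K * a r := by
    refine (norm_add_le _ _).trans (add_le_add (hf r) ?_)
    rw [norm_smul, Real.norm_of_nonneg (ha r), mul_comm]
    exact mul_le_mul_of_nonneg_right (hW _) (ha r)
  rw [inner_add_right, hg, add_zero]
  refine (abs_real_inner_le_norm _ _).trans ?_
  rw [mul_comm]
  exact mul_le_mul_of_nonneg_right hforce (norm_nonneg _)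

lemma norm_position_sub_le (h : IsDrivenMotion W a β X V) {R : ℝ}
    (hR : ∀ r ∈ Icc s t, ‖V r‖ ≤ R) {r : ℝ} (hr : r ∈ Icc s t) : ‖X r - X s‖ ≤ R * (r - s) := by
  choose u hu hX using h.position
  have hs : s ∈ Icc s t := left_mem_Icc.2 (hr.1.trans hr.2)
  have := (convex_Icc s t).norm_image_sub_le_of_norm_hasDerivWithin_le
    (fun r _ => (hX r).hasDerivWithinAt) (fun r hr => (hu r).trans (hR r hr)) hs hr
  rwa [Real.norm_of_nonneg (sub_nonneg.2 hr.1)] at this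

lemma le_inner_sub_inner (h : IsDrivenMotion W a β X V) (hβ : 0 ≤ β) {R m : ℝ} {w : E}
    (hB : ∀ r, HasDerivAt B (a r) r) (ha : ∀ r, 0 ≤ a r) (hst : s ≤ t)
    (hR : ∀ r ∈ Icc s t, ‖V r‖ ≤ R) (hw : ∀ r ∈ Icc s t, m ≤ ⟪W (X r), w⟫) :
    m * (B t - B s) - (1 + β * R) * ‖w‖ * (t - s) ≤ ⟪V t, w⟫ - ⟪V s, w⟫ := by
  choose f g hf _ hg hV using h.momentum
  have hderiv (r : ℝ) :
      HasDerivAt (fun r => ⟪V r, w⟫ - m * B r + (1 + β * R) * ‖w‖ * r)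
        (⟪f r + a r • W (X r) + g r, w⟫ - m * a r + (1 + β * R) * ‖w‖) r := by
    refine ((((hV r).inner ℝ (hasDerivAt_const r w)).sub ((hB r).const_mul m)).add
      ((hasDerivAt_id r).const_mul ((1 + β * R) * ‖w‖))).congr_deriv ?_
    rw [inner_zero_right, zero_add, mul_one]
  have hmono := monotoneOn_of_hasDerivWithinAt_nonneg (convex_Icc s t)
    (fun r _ => (hderiv r).continuousAt.continuousWithinAt)
    (fun r _ => (hderiv r).hasDerivWithinAt) fun r hr => by
      have hr := interior_subset hr
      have hdrive := mul_le_mul_of_nonneg_left (hw r hr) (ha r)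
      have hrest : ‖f r + g r‖ ≤ 1 + β * R := (norm_add_le _ _).trans
        (add_le_add (hf r) ((hg r).trans (mul_le_mul_of_nonneg_left (hR r hr) hβ)))
      have hinner := (abs_le.1 ((abs_real_inner_le_norm (f r + g r) w).trans
        (mul_le_mul_of_nonneg_right hrest (norm_nonneg w)))).1
      rw [add_right_comm, inner_add_left, real_inner_smul_left]
      linarith
  have := hmono (left_mem_Icc.2 hst) (right_mem_Icc.2 hst) hst
  simp only at this
  linarith

lemma half_mul_sub_le_norm_add_norm (h : IsDrivenMotion W a β X V) (hβ : 0 ≤ β)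
    (hB : ∀ r, HasDerivAt B (a r) r) (ha : ∀ r, 0 ≤ a r) (hst : s ≤ t) {L : NNReal}
    (hL : LipschitzWith L W) (hW : 1 ≤ ‖W (X s)‖) {R : ℝ} (hR : ∀ r ∈ Icc s t, ‖V r‖ ≤ R)
    (hshort : L * (R * (t - s)) ≤ 1 / 2) :
    (B t - B s) / 2 ≤ ‖V t‖ + ‖V s‖ + (1 + β * R) * (t - s) := by
  set w := W (X s)
  have hR0 : 0 ≤ R := (norm_nonneg _).trans (hR s (left_mem_Icc.2 hst))
  have haligned : ∀ r ∈ Icc s t, ‖w‖ ^ 2 / 2 ≤ ⟪W (X r), w⟫ := fun r hr => by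
    have hdrift : ‖W (X r) - w‖ ≤ 1 / 2 := by
      refine (hL.norm_sub_le _ _).trans (le_trans ?_ hshort)
      gcongr
      exact (h.norm_position_sub_le hR hr).trans (by gcongr; exact hr.2)
    have hinner := (abs_le.1 (abs_real_inner_le_norm (W (X r) - w) w)).1
    rw [inner_sub_left, real_inner_self_eq_norm_sq] at hinner
    nlinarith [mul_le_mul_of_nonneg_right hdrift (norm_nonneg w)]
  have hBst : 0 ≤ B t - B s :=
    sub_nonneg.2 (monotone_of_hasDerivAt_nonneg hB ha hst)
  have hgain := h.le_inner_sub_inner hβ hB ha hst hR haligned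
  have hs := (abs_le.1 (abs_real_inner_le_norm (V s) w)).1
  have ht := real_inner_le_norm (V t) w
  refine le_of_mul_le_mul_right ?_ (zero_lt_one.trans_le hW)
  nlinarith [mul_nonneg hBst (mul_nonneg (norm_nonneg w) (sub_nonneg.2 hW))]

lemma le_norm_and_norm_lt_of_pulse (h : IsDrivenMotion W a β X V) (hβ : 0 ≤ β)
    (hB : ∀ r, HasDerivAt B (a r) r) (ha : ∀ r, 0 ≤ a r) {L : NNReal} (hL : LipschitzWith L W)
    {K : ℝ} (hK : ∀ x, ‖W x‖ ≤ K) (hW : ∀ x, 1 ≤ ‖W x‖) {A R M τ : ℝ} (hV0 : ‖V 0‖ < M)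
    (hs : 0 ≤ s) (hst : s ≤ t) (htτ : t ≤ τ) (hB0 : B 0 = 0) (hBs : B s = 0) (hBt : B t = A)
    (hBτ : B τ = A) (hA : 4 * M + 2 * τ + 4 ≤ A) (hR : M + τ + K * A ≤ R)
    (hshort : L * (R * (t - s)) ≤ 1 / 2) (hweak : (1 + β * R) * (t - s) ≤ 1) :
    M + 1 ≤ ‖V τ‖ ∧ ‖V τ‖ < R := by
  have hK0 : 0 ≤ K := (norm_nonneg _).trans (hK (X 0))
  have hvar {r₁ r₂ : ℝ} (hr : r₁ ≤ r₂) := abs_le.1 (h.abs_norm_sub_norm_le hK hB ha hr)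
  have hbound {r : ℝ} (hr : 0 ≤ r) (hrτ : r ≤ τ) : ‖V r‖ < R := by
    have hBr : K * (B r - B 0) ≤ K * A := by
      gcongr
      linarith [monotone_of_hasDerivAt_nonneg hB ha hrτ]
    linarith [(hvar hr).2]
  have hbefore : ‖V s‖ - ‖V 0‖ ≤ s := by simpa [hB0, hBs] using (hvar hs).2
  have hpulse : A / 2 ≤ ‖V t‖ + ‖V s‖ + (1 + β * R) * (t - s) := by
    simpa [hBs, hBt] using h.half_mul_sub_le_norm_add_norm hβ hB ha hst hL (hW _)
      (fun r hr => (hbound (hs.trans hr.1) (hr.2.trans htτ)).le) hshort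
  have hafter : -(τ - t) ≤ ‖V τ‖ - ‖V t‖ := by simpa [hBt, hBτ] using (hvar htτ).1
  exact ⟨by linarith, hbound (hs.trans (hst.trans htτ)) le_rfl⟩

end IsDrivenMotion

lemma exists_smooth_pulse {A t₀ t₁ : ℝ} (hA : 0 ≤ A) (ht : t₀ < t₁) :
    ∃ B a : ℝ → ℝ, ContDiff ℝ ∞ a ∧ (∀ t, HasDerivAt B (a t) t) ∧ (∀ t, 0 ≤ a t) ∧
      (∀ t ≤ t₀, B t = 0) ∧ (∀ t ≥ t₁, B t = A) ∧ (∀ t, t < t₀ ∨ t₁ < t → a t = 0) := by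
  have hpos : 0 < t₁ - t₀ := sub_pos.2 ht
  set B : ℝ → ℝ := fun t => A * Real.smoothTransition ((t - t₀) / (t₁ - t₀))
  have hsmooth : ContDiff ℝ ∞ B :=
    contDiff_const.mul (Real.smoothTransition.contDiff.comp (by fun_prop))
  have hmono : Monotone B := fun s t hst =>
    mul_le_mul_of_nonneg_left (Real.smoothTransition.monotone (by gcongr)) hA
  have hleft (t : ℝ) (ht : t ≤ t₀) : B t = 0 := mul_eq_zero_of_right _
    (Real.smoothTransition.zero_of_nonpos (div_nonpos_of_nonpos_of_nonneg (by linarith) hpos.le))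
  have hright (t : ℝ) (ht : t₁ ≤ t) : B t = A := by
    simp only [B]
    rw [Real.smoothTransition.one_of_one_le ((one_le_div hpos).2 (by linarith)), mul_one]
  refine ⟨B, deriv B, (contDiff_infty_iff_deriv.1 hsmooth).2,
    fun t => (hsmooth.differentiable (by simp) t).hasDerivAt, fun t => hmono.deriv_nonneg,
    hleft, hright, ?_⟩
  rintro t (ht | ht)
  · have : B =ᶠ[𝓝 t] fun _ => 0 := eventually_of_mem (Iio_mem_nhds ht) fun y hy => hleft y hy.le
    rw [this.deriv_eq, deriv_const]
  · have : B =ᶠ[𝓝 t] fun _ => A := eventually_of_mem (Ioi_mem_nhds ht) fun y hy => hright y hy.le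
    rw [this.deriv_eq, deriv_const]

lemma exists_accelerating_amplitude {W : F → E} {L : NNReal} {K : ℝ} (hL : LipschitzWith L W)
    (hK : ∀ x, ‖W x‖ ≤ K) (hW : ∀ x, 1 ≤ ‖W x‖) {β τ M : ℝ} (hβ : 0 ≤ β) (hτ : 0 < τ)
    (hM : 0 ≤ M) :
    ∃ a : ℝ → ℝ, ContDiff ℝ ∞ a ∧ (∃ δ > 0, ∀ t, t ≤ δ ∨ τ - δ ≤ t → a t = 0) ∧
      ∃ R > 0, ∀ X V, IsDrivenMotion W a β X V → ‖V 0‖ < M → M + 1 ≤ ‖V τ‖ ∧ ‖V τ‖ < R := by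
  have hK0 : 0 ≤ K := (norm_nonneg _).trans (hK 0)
  set A : ℝ := 4 * M + 2 * τ + 4
  set R : ℝ := M + τ + K * A
  have hR : 0 < R := by positivity
  have hsmall : ∀ᶠ ε : ℝ in 𝓝[>] 0,
      ε < τ / 4 ∧ L * (R * ε) < 1 / 2 ∧ (1 + β * R) * ε < 1 :=
    nhdsWithin_le_nhds <| by
      have hcont (f : ℝ → ℝ) (hf : Continuous f) (y : ℝ) (hy : f 0 < y) : ∀ᶠ ε in 𝓝 0, f ε < y :=
        hf.continuousAt.eventually_lt continuousAt_const hy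
      exact (hcont _ continuous_id _ (by simp only [id]; positivity)).and
        ((hcont _ (by fun_prop) _ (by simp)).and (hcont _ (by fun_prop) _ (by simp)))
  obtain ⟨ε, ⟨hετ, hshort, hweak⟩, (hε : 0 < ε)⟩ :=
    (hsmall.and self_mem_nhdsWithin).exists
  obtain ⟨B, a, hsmooth, hB, ha, hleft, hright, hvanish⟩ :=
    exists_smooth_pulse (show 0 ≤ A by positivity) (show τ / 2 < τ / 2 + ε by linarith)
  refine ⟨a, hsmooth, ⟨τ / 8, by positivity, fun t ht => hvanish t ?_⟩, R, hR, fun X V h hV0 => ?_⟩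
  · exact ht.imp (fun ht => by linarith) fun ht => by linarith
  · exact h.le_norm_and_norm_lt_of_pulse hβ hB ha hL hK hW hV0 (s := τ / 2) (t := τ / 2 + ε)
      (by positivity) (by linarith) (by linarith) (hleft _ (by positivity)) (hleft _ le_rfl)
      (hright _ le_rfl) (hright _ (by linarith)) le_rfl le_rfl
      (by rw [add_sub_cancel_left]; exact hshort.le)
      (by rw [add_sub_cancel_left]; exact hweak.le)

end Motion

section EuclideanPlane

lemma norm_toLp_eq_en (v : V2) : ‖WithLp.toLp 2 v‖ = en v := by
  simp [WithLp.prod_norm_eq_of_L2, en]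

lemma inner_toLp_eq_inner2 (v w : V2) : ⟪WithLp.toLp 2 v, WithLp.toLp 2 w⟫ = inner2 v w := by
  simp [WithLp.prod_inner_apply, inner2, mul_comm]

lemma hasDerivAt_toLp_comp {V : ℝ → V2} {V' : V2} {t : ℝ} (h : HasDerivAt V V' t) :
    HasDerivAt (fun s => WithLp.toLp 2 (V s)) (WithLp.toLp 2 V') t :=
  (WithLp.prodContinuousLinearEquiv 2 ℝ ℝ ℝ).symm.hasFDerivAt.comp_hasDerivAt t h

lemma norm_le_en (v : V2) : ‖v‖ ≤ en v :=
  max_le (Real.abs_le_sqrt (by nlinarith [sq_nonneg v.2]))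
    (Real.abs_le_sqrt (by nlinarith [sq_nonneg v.1]))

lemma en_smul (r : ℝ) (v : V2) : en (r • v) = |r| * en v := by
  simp only [← norm_toLp_eq_en, WithLp.toLp_smul, norm_smul, Real.norm_eq_abs]

lemma en_pperp (v : V2) : en (pperp v) = en v := by simp [en, pperp, add_comm]

lemma en_sq (v : V2) : en v ^ 2 = v.1 ^ 2 + v.2 ^ 2 := Real.sq_sqrt (by positivity)

lemma en_vhat_le (c : ℝ) (v : V2) : en (vhat c v) ≤ en v := by
  have hone : 1 ≤ √(1 + (v.1 ^ 2 + v.2 ^ 2) / c ^ 2) :=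
    Real.one_le_sqrt.2 (le_add_of_nonneg_right (by positivity))
  rw [vhat, en_smul, abs_of_nonneg (by positivity)]
  exact mul_le_of_le_one_left (Real.sqrt_nonneg _) (div_le_one_of_le₀ hone (by positivity))

lemma inner2_pperp_vhat (c : ℝ) (v : V2) : inner2 v (pperp (vhat c v)) = 0 := by
  simp only [inner2, pperp, vhat, Prod.smul_fst, Prod.smul_snd, smul_eq_mul]
  ring

lemma IsRelChar.isDrivenMotion {c 𝔟 s : ℝ} {f : ℝ → V2 → V2 → V2} {W : V2 → V2} {a : ℝ → ℝ}
    {x v : V2} {X V : ℝ → V2} (hf : ∀ t x v, en (f t x v) ≤ 1)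
    (h : IsRelChar c (fun t y w => f t y w + a t • W y + 𝔟 • pperp (vhat c w)) s x v X V) :
    IsDrivenMotion (fun y => WithLp.toLp 2 (W y)) a |𝔟| X (fun t => WithLp.toLp 2 (V t)) where
  position t := ⟨vhat c (V t),
    ((norm_le_en _).trans (en_vhat_le c _)).trans_eq (norm_toLp_eq_en _).symm, (h.2.2 t).1⟩
  momentum t := by
    refine ⟨WithLp.toLp 2 (f t (X t) (V t)), WithLp.toLp 2 (𝔟 • pperp (vhat c (V t))), ?_, ?_, ?_,
      hasDerivAt_toLp_comp (h.2.2 t).2⟩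
    · exact (norm_toLp_eq_en _).trans_le (hf _ _ _)
    · rw [WithLp.toLp_smul, inner_smul_right, inner_toLp_eq_inner2, inner2_pperp_vhat, mul_zero]
    · rw [norm_toLp_eq_en, norm_toLp_eq_en, en_smul, en_pperp]
      exact mul_le_mul_of_nonneg_left (en_vhat_le c _) (abs_nonneg 𝔟)

end EuclideanPlane

section PeriodicBounds

variable {E : Type*} [NormedAddCommGroup E] {g : V2 → E}

lemma Zper.exists_norm_le (hg : Zper g) (hc : Continuous g) : ∃ C, ∀ x, ‖g x‖ ≤ C := by
  obtain ⟨C, hC⟩ := isCompact_Icc.exists_bound_of_continuousOn (hc.continuousOn (s := unitSq))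
  refine ⟨C, fun x => ?_⟩
  have hfract := hg (Int.fract x.1, Int.fract x.2) ⌊x.1⌋ ⌊x.2⌋
  simp only [Int.fract_add_floor] at hfract
  rw [show g x = _ from hfract]
  exact hC _ ⟨⟨Int.fract_nonneg _, Int.fract_nonneg _⟩,
    ⟨(Int.fract_lt_one _).le, (Int.fract_lt_one _).le⟩⟩

variable [NormedSpace ℝ E]

lemma Zper.fderiv (hg : Zper g) : Zper (fderiv ℝ g) := fun x m n => by
  have hshift : (fun y => g (y + ((m : ℝ), (n : ℝ)))) = g := funext fun y => hg y m n
  have := fderiv_comp_add_right (𝕜 := ℝ) (f := g) (x := x) ((m : ℝ), (n : ℝ))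
  rw [hshift] at this
  exact this.symm

lemma Zper.exists_lipschitzWith (hg : Zper g) (hc : ContDiff ℝ 1 g) : ∃ L, LipschitzWith L g := by
  obtain ⟨C, hC⟩ := hg.fderiv.exists_norm_le (hc.continuous_fderiv one_ne_zero)
  exact ⟨C.toNNReal, lipschitzWith_of_nnnorm_fderiv_le (hc.differentiable one_ne_zero)
    fun x => NNReal.coe_le_coe.1 ((hC x).trans (Real.le_coe_toNNReal C))⟩

end PeriodicBounds

section Sawtooth

lemma cos_two_pi_mul_lt_of_lt_abs_sub_round {δ s : ℝ} (hδ : 0 ≤ δ) (hs : δ < |s - round s|) :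
    cos (2 * π * s) < cos (2 * π * δ) := by
  have hround : cos (2 * π * s) = cos (2 * π * |s - round s|) := by
    rw [← Real.cos_sub_int_mul_two_pi _ (round s), ← Real.cos_abs,
      show 2 * π * s - round s * (2 * π) = 2 * π * (s - round s) by ring, abs_mul,
      abs_of_pos Real.two_pi_pos]
  rw [hround]
  refine Real.cos_lt_cos_of_nonneg_of_le_pi (by positivity) ?_ (by gcongr)
  calc 2 * π * |s - round s| ≤ 2 * π * (1 / 2) := by gcongr; exact abs_sub_round s
    _ = π := by ring

lemma exists_smooth_cutoff_near_int {δ : ℝ} (hδ : 0 < δ) (hδ' : δ < 1 / 2) :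
    ∃ χ : ℝ → ℝ, ContDiff ℝ ∞ χ ∧ χ.Periodic 1 ∧ (∀ s, 0 ≤ χ s) ∧ (∀ k : ℤ, χ =ᶠ[𝓝 (k : ℝ)] 0) ∧
      ∀ s : ℝ, δ < |s - round s| → χ =ᶠ[𝓝 s] 1 := by
  set κ : ℝ := 1 - cos (2 * π * δ)
  have hκ : 0 < κ := by
    have : cos (2 * π * δ) < cos 0 :=
      Real.cos_lt_cos_of_nonneg_of_le_pi le_rfl (by nlinarith [pi_pos]) (by positivity)
    rw [cos_zero] at this
    exact sub_pos.2 this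
  set u : ℝ → ℝ := fun s => 2 * (1 - cos (2 * π * s)) / κ - 1
  have hu : ContDiff ℝ ∞ u := by fun_prop
  refine ⟨fun s => Real.smoothTransition (u s), Real.smoothTransition.contDiff.comp hu,
    fun s => ?_, fun s => Real.smoothTransition.nonneg _, fun k => ?_, fun s hs => ?_⟩
  · simp only [u, mul_add, mul_one, Real.cos_add_two_pi]
  · have huk : u k < 0 := by
      simp only [u, mul_comm (2 * π), Real.cos_int_mul_two_pi]
      norm_num
    filter_upwards [hu.continuous.continuousAt.eventually_lt_const huk] with y hy
    exact Real.smoothTransition.zero_of_nonpos hy.le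
  · have hus : 1 < u s := by
      have : 2 * κ / κ < 2 * (1 - cos (2 * π * s)) / κ := by
        gcongr
        exact sub_lt_sub_left (cos_two_pi_mul_lt_of_lt_abs_sub_round hδ.le hs) 1
      rw [mul_div_cancel_right₀ _ hκ.ne'] at this
      simp only [u]
      linarith
    filter_upwards [hu.continuous.continuousAt.eventually_const_lt hus] with y hy
    exact Real.smoothTransition.one_of_one_le hy.le

lemma fract_eventuallyEq_sub_floor {s : ℝ} (hs : s ≠ ⌊s⌋) : Int.fract =ᶠ[𝓝 s] (· - (⌊s⌋ : ℝ)) := by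
  filter_upwards [Ioo_mem_nhds ((Int.floor_le s).lt_of_ne hs.symm) (Int.lt_floor_add_one s)]
    with y hy
  rw [Int.fract, Int.floor_eq_iff.2 ⟨hy.1.le, hy.2⟩]

lemma exists_smooth_sawtooth {δ : ℝ} (hδ : 0 < δ) (hδ' : δ < 1 / 2) :
    ∃ σ : ℝ → ℝ, ContDiff ℝ ∞ σ ∧ σ.Periodic 1 ∧ (∀ s, 0 ≤ σ s) ∧
      ∀ s : ℝ, δ < |s - round s| → ∃ k : ℤ, σ =ᶠ[𝓝 s] (· - (k : ℝ)) := by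
  obtain ⟨χ, hχ, hper, hnonneg, hzero, hone⟩ := exists_smooth_cutoff_near_int hδ hδ'
  refine ⟨fun s => Int.fract s * χ s, contDiff_iff_contDiffAt.2 fun s => ?_,
    (Int.fract_periodic ℝ).mul hper, fun s => mul_nonneg (Int.fract_nonneg s) (hnonneg s),
    fun s hs => ⟨⌊s⌋, ?_⟩⟩
  · by_cases hs : s = ⌊s⌋
    · have hzero := hzero ⌊s⌋
      rw [← hs] at hzero
      refine (contDiffAt_const (c := (0 : ℝ))).congr_of_eventuallyEq ?_
      filter_upwards [hzero] with y hy
      exact mul_eq_zero_of_right _ hy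
    · exact ((contDiffAt_id.sub contDiffAt_const).mul hχ.contDiffAt).congr_of_eventuallyEq
        ((fract_eventuallyEq_sub_floor hs).mul EventuallyEq.rfl)
  · have hs' : s ≠ ⌊s⌋ := fun h => by
      rw [h, round_intCast, sub_self, abs_zero] at hs
      exact hs.not_gt hδ
    filter_upwards [fract_eventuallyEq_sub_floor hs', hone s hs] with y hfract hy
    rw [hfract, hy, Pi.one_apply, mul_one]

end Sawtooth

section StripGeometry

lemma inner2_smul_right (r : ℝ) (x y : V2) : inner2 x (r • y) = r * inner2 x y := by
  simp only [inner2, Prod.smul_fst, Prod.smul_snd, smul_eq_mul]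
  ring

lemma inner2_add_right (x y z : V2) : inner2 x (y + z) = inner2 x y + inner2 x z := by
  simp only [inner2, Prod.fst_add, Prod.snd_add]
  ring

lemma inner2_smul_add_inner2_pperp_smul {e : V2} (he : en e = 1) (x : V2) :
    inner2 x e • e + inner2 x (pperp e) • pperp e = x := by
  have hsq : e.1 ^ 2 + e.2 ^ 2 = 1 := by rw [← en_sq, he, one_pow]
  ext <;> simp only [inner2, pperp, Prod.fst_add, Prod.snd_add, Prod.smul_fst, Prod.smul_snd,
    smul_eq_mul]
  · linear_combination x.1 * hsq
  · linear_combination x.2 * hsq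

lemma one_le_en_of_isCoprime {a b : ℤ} (hab : IsCoprime a b) : 1 ≤ en ((a : ℝ), (b : ℝ)) := by
  have hpos : 0 < a ^ 2 + b ^ 2 := by
    rcases hab.ne_zero_or_ne_zero with ha | hb <;> positivity
  have hone : 1 ≤ (a ^ 2 + b ^ 2 : ℝ) := mod_cast Int.add_one_le_iff.2 hpos
  exact Real.one_le_sqrt.2 hone

lemma exists_eq_smul_isCoprime {n : V2} (hn : n ≠ 0) {r : ℝ} (hr : 0 < r)
    (hsep : ∀ i j : ℤ, i * n.1 + j * n.2 ≠ 0 → r < |i * n.1 + j * n.2|) :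
    ∃ (h : ℝ) (a b : ℤ), r < h ∧ IsCoprime a b ∧ n = h • ((a : ℝ), (b : ℝ)) := by
  set H : AddSubgroup ℝ := AddSubgroup.closure {n.1, n.2}
  have hn₁ : n.1 ∈ H := AddSubgroup.subset_closure (by simp)
  have hn₂ : n.2 ∈ H := AddSubgroup.subset_closure (by simp)
  have lt_of_mem {g : ℝ} (hg : g ∈ H) (hpos : 0 < g) : r < g := by
    obtain ⟨i, j, rfl⟩ := AddSubgroup.mem_closure_pair.1 hg
    simp only [zsmul_eq_mul] at hpos ⊢
    simpa only [abs_of_pos hpos] using hsep i j hpos.ne'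
  have hne : H ≠ ⊥ := fun hbot => hn <| by
    rw [hbot, AddSubgroup.mem_bot] at hn₁ hn₂
    exact Prod.ext hn₁ hn₂
  obtain ⟨h, hleast⟩ := AddSubgroup.exists_isLeast_pos hne hr
    (Set.disjoint_left.2 fun g hg hgr => (lt_of_mem hg hgr.1).not_gt hgr.2)
  have hcyclic := AddSubgroup.cyclic_of_min hleast
  obtain ⟨a, ha⟩ := AddSubgroup.mem_closure_singleton.1 (hcyclic ▸ hn₁)
  obtain ⟨b, hb⟩ := AddSubgroup.mem_closure_singleton.1 (hcyclic ▸ hn₂)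
  obtain ⟨i, j, hij⟩ := AddSubgroup.mem_closure_pair.1 hleast.1.1
  simp only [zsmul_eq_mul] at ha hb hij
  refine ⟨h, a, b, lt_of_mem hleast.1.1 hleast.1.2, ⟨i, j, ?_⟩, Prod.ext ?_ ?_⟩
  · have : (i * a + j * b : ℝ) = 1 := mul_right_cancel₀ hleast.1.2.ne' (by
      rw [← ha, ← hb] at hij
      linarith)
    exact_mod_cast this
  · simp [← ha, mul_comm]
  · simp [← hb, mul_comm]

lemma mem_stripAround_of_abs_inner2_sub_le {p e x : V2} {h l : ℝ} {a b m : ℤ} (he : en e = 1)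
    (hh : 0 < h) (hab : IsCoprime a b) (hn : pperp e = h • ((a : ℝ), (b : ℝ)))
    (hx : |inner2 (x - p) ((a : ℝ), (b : ℝ)) - m| ≤ l / h) :
    x ∈ stripAround (periodizedLine p e) (pperp e) l := by
  obtain ⟨i, j, hij⟩ := hab
  set g : V2 := (((m * i : ℤ) : ℝ), ((m * j : ℤ) : ℝ))
  have hg : inner2 g ((a : ℝ), (b : ℝ)) = m := by
    have : (i * a + j * b : ℝ) = 1 := mod_cast hij
    simp only [inner2, g, Int.cast_mul]
    linear_combination (m : ℝ) * this
  have hheight : inner2 (x - p - g) (pperp e) = h * (inner2 (x - p) ((a : ℝ), (b : ℝ)) - m) := by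
    rw [hn, inner2_smul_right, ← hg]
    simp only [inner2, Prod.fst_sub, Prod.snd_sub]
    ring
  refine ⟨p + inner2 (x - p - g) e • e + g, ⟨_, _, _, rfl⟩, inner2 (x - p - g) (pperp e), ?_, ?_⟩
  · rw [hheight, abs_mul, abs_of_pos hh, mul_comm]
    exact (le_div_iff₀ hh).1 hx
  · have := inner2_smul_add_inner2_pperp_smul he (x - p - g)
    linear_combination -this

lemma subset_stripAround (L : Set V2) (n : V2) {l : ℝ} (hl : 0 ≤ l) : L ⊆ stripAround L n l :=
  fun x hx => ⟨x, hx, 0, by rwa [abs_zero], by simp⟩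

lemma inner2_pperp_eq_zero_of_disjoint {p q e e' : V2}
    (h : Disjoint (periodizedLine q e') (periodizedLine p e)) : inner2 e' (pperp e) = 0 := by
  by_contra hne
  refine Set.disjoint_left.1 h
    ⟨inner2 (p - q) (pperp e) / inner2 e' (pperp e), 0, 0, rfl⟩
    ⟨inner2 (p - q) (pperp e') / inner2 e' (pperp e), 0, 0, ?_⟩
  ext <;> simp only [Prod.fst_add, Prod.snd_add, Prod.smul_fst, Prod.smul_snd, smul_eq_mul] <;>
    field_simp <;> simp only [inner2, pperp, Prod.fst_sub, Prod.snd_sub] <;> ring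

end StripGeometry

section Derivatives

/-- The linear form `inner2 · k`, through which the derivative of a scalar function on the plane is
expressed by its gradient. -/
def inner2L (k : V2) : V2 →L[ℝ] ℝ :=
  k.1 • ContinuousLinearMap.fst ℝ ℝ ℝ + k.2 • ContinuousLinearMap.snd ℝ ℝ ℝ

lemma inner2L_apply (k x : V2) : inner2L k x = inner2 x k := by
  simp [inner2L, inner2, mul_comm]

lemma hasFDerivAt_inner2_sub (p k x : V2) :
    HasFDerivAt (fun y => inner2 (y - p) k) (inner2L k) x := by
  simp only [← inner2L_apply]
  exact ((inner2L k).hasFDerivAt (x := x - p)).comp x ((hasFDerivAt_id x).sub_const p)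

lemma contDiff_inner2_sub (p k : V2) : ContDiff ℝ ∞ fun y => inner2 (y - p) k := by
  simp only [← inner2L_apply]
  fun_prop

variable {u f g : V2 → ℝ} {k l : V2} {A : ℝ → ℝ} {t : ℝ} {x : V2}

lemma gradx_time_mul {w : V2} (h : HasFDerivAt u (inner2L w) x) :
    gradx (fun z => A z.1 * u z.2) t x = A t • w := by
  rw [gradx, (h.const_mul (A t)).fderiv]
  ext <;> simp [inner2L]

lemma divF_congr_of_eventuallyEq {E E' : V2 → V2} (h : E =ᶠ[𝓝 x] E') : divF E x = divF E' x := by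
  have h₁ : fderiv ℝ (fun y => (E y).1) x = fderiv ℝ (fun y => (E' y).1) x :=
    (h.fun_comp Prod.fst).fderiv_eq
  have h₂ : fderiv ℝ (fun y => (E y).2) x = fderiv ℝ (fun y => (E' y).2) x :=
    (h.fun_comp Prod.snd).fderiv_eq
  rw [divF, divF, h₁, h₂]

lemma divF_smul_add_smul {f' g' : V2} (hf : HasFDerivAt f (inner2L f') x)
    (hg : HasFDerivAt g (inner2L g') x) :
    divF (fun y => f y • k + g y • l) x = inner2 f' k + inner2 g' l := by
  simp only [divF, Prod.fst_add, Prod.snd_add, Prod.smul_fst, Prod.smul_snd, smul_eq_mul]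
  rw [((hf.mul_const k.1).fun_add (hg.mul_const l.1)).fderiv,
    ((hf.mul_const k.2).fun_add (hg.mul_const l.2)).fderiv]
  simp only [add_apply, smul_apply, inner2L_apply, inner2, smul_eq_mul]
  ring

lemma lapx_time_mul {f' g' : V2} (hu : ∀ᶠ y in 𝓝 x, HasFDerivAt u (inner2L (f y • k + g y • l)) y)
    (hf : HasFDerivAt f (inner2L f') x) (hg : HasFDerivAt g (inner2L g') x) :
    lapx (fun z => A z.1 * u z.2) t x = A t * (inner2 f' k + inner2 g' l) := by
  calc lapx (fun z => A z.1 * u z.2) t x = divF (gradx (fun z => A z.1 * u z.2) t) x := rfl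
    _ = divF (fun y => f y • (A t • k) + g y • (A t • l)) x :=
      divF_congr_of_eventuallyEq <| hu.mono fun y hy => by
        rw [gradx_time_mul hy, smul_add, smul_comm, smul_comm (A t) (g y)]
    _ = A t * (inner2 f' k + inner2 g' l) := by
      rw [divF_smul_add_smul hf hg, inner2_smul_right, inner2_smul_right, mul_add]

end Derivatives

/-- The wave `exp (2πσ(ξ)) cos (2πη + θ)` in the coordinates `ξ = inner2 (x - p) k` and
`η = inner2 (x - p) (pperp k)`. Where `σ` is a translation it is, up to a factor, the real part of
the holomorphic function `exp (2π(ξ + iη) + iθ)`. -/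
def stripWave (σ : ℝ → ℝ) (p k : V2) (θ : ℝ) (x : V2) : ℝ :=
  exp (2 * π * σ (inner2 (x - p) k)) * cos (2 * π * inner2 (x - p) (pperp k) + θ)

/-- The opposite of the gradient that `stripWave σ p k 0` would have if `σ` were locally a
translation; unlike the true gradient, it vanishes nowhere. -/
def stripField (σ : ℝ → ℝ) (p k : V2) (x : V2) : V2 :=
  (-(2 * π)) • (stripWave σ p k 0 x • k + stripWave σ p k (π / 2) x • pperp k)

section StripWave

variable {σ : ℝ → ℝ} {p k x : V2} {θ : ℝ}

lemma contDiff_stripWave (hσ : ContDiff ℝ ∞ σ) : ContDiff ℝ ∞ (stripWave σ p k θ) :=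
  (contDiff_const.mul (hσ.comp (contDiff_inner2_sub p k))).exp.mul
    ((contDiff_const.mul (contDiff_inner2_sub p (pperp k))).add contDiff_const).cos

lemma contDiff_stripField (hσ : ContDiff ℝ ∞ σ) : ContDiff ℝ ∞ (stripField σ p k) := by
  have hwave (θ : ℝ) : ContDiff ℝ ∞ (stripWave σ p k θ) := contDiff_stripWave hσ
  unfold stripField
  fun_prop

lemma inner2_add_int_sub (p x : V2) (a b m n : ℤ) :
    inner2 ((x.1 + (m : ℝ), x.2 + (n : ℝ)) - p) ((a : ℝ), (b : ℝ)) =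
      inner2 (x - p) ((a : ℝ), (b : ℝ)) + (m * a + n * b : ℤ) := by
  simp only [inner2, Prod.fst_sub, Prod.snd_sub]
  push_cast
  ring

lemma zper_stripWave (hσ : σ.Periodic 1) (p : V2) (a b : ℤ) (θ : ℝ) :
    Zper (stripWave σ p ((a : ℝ), (b : ℝ)) θ) := fun x m n => by
  have hperp : pperp ((a : ℝ), (b : ℝ)) = ((b : ℝ), ((-a : ℤ) : ℝ)) := by simp [pperp]
  have hper (s : ℝ) (m : ℤ) : σ (s + m) = σ s := by simpa using hσ.int_mul m s
  simp only [stripWave, hperp, inner2_add_int_sub, hper, mul_add]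
  rw [add_right_comm, mul_comm (2 * π) (Int.cast _), Real.cos_add_int_mul_two_pi]

lemma zper_stripField (hσ : σ.Periodic 1) (p : V2) (a b : ℤ) :
    Zper (stripField σ p ((a : ℝ), (b : ℝ))) := fun x m n => by
  simp only [stripField, zper_stripWave hσ p a b _ x m n]

lemma stripWave_add_pi : stripWave σ p k (θ + π) x = -stripWave σ p k θ x := by
  rw [stripWave, ← add_assoc, Real.cos_add_pi, mul_neg, stripWave]

lemma en_stripField :
    en (stripField σ p k x) = 2 * π * exp (2 * π * σ (inner2 (x - p) k)) * en k := by
  rw [← abs_of_pos (show 0 < 2 * π * exp (2 * π * σ (inner2 (x - p) k)) by positivity), ← en_smul,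
    en, en, stripField]
  congr 1
  simp only [stripWave, Real.cos_add_pi_div_two, add_zero, Prod.smul_fst, Prod.smul_snd,
    Prod.fst_add, Prod.snd_add, smul_eq_mul]
  set η := 2 * π * inner2 (x - p) (pperp k)
  simp only [pperp]
  linear_combination (2 * π * exp (2 * π * σ (inner2 (x - p) k))) ^ 2 * (k.1 ^ 2 + k.2 ^ 2) *
    Real.sin_sq_add_cos_sq η

lemma one_le_en_stripField (hσ : ∀ s, 0 ≤ σ s) (hk : 1 ≤ en k) : 1 ≤ en (stripField σ p k x) := by
  rw [en_stripField]
  refine one_le_mul_of_one_le_of_one_le (one_le_mul_of_one_le_of_one_le ?_ ?_) hk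
  · linarith [Real.two_le_pi]
  · exact Real.one_le_exp (mul_nonneg Real.two_pi_pos.le (hσ _))

lemma hasFDerivAt_stripWave {σ' : ℝ} (hσ : HasDerivAt σ σ' (inner2 (x - p) k)) :
    HasFDerivAt (stripWave σ p k θ)
      (inner2L ((2 * π) • ((σ' * stripWave σ p k θ x) • k +
        stripWave σ p k (θ + π / 2) x • pperp k))) x := by
  have hexp := ((hσ.const_mul (2 * π)).exp).comp_hasFDerivAt x (hasFDerivAt_inner2_sub p k x)
  have hcos := ((((hasDerivAt_id _).const_mul (2 * π)).add_const θ).cos).comp_hasFDerivAt x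
    (hasFDerivAt_inner2_sub p (pperp k) x)
  refine (hexp.mul hcos).congr_fderiv (ContinuousLinearMap.ext fun y => ?_)
  simp only [add_apply, smul_apply, inner2L_apply, inner2_smul_right, inner2_add_right,
    Function.comp_apply, smul_eq_mul, stripWave, id_eq, ← add_assoc, Real.cos_add_pi_div_two]
  ring

lemma eventually_hasFDerivAt_stripWave {c : ℝ} (hσ : σ =ᶠ[𝓝 (inner2 (x - p) k)] (· - c)) :
    ∀ᶠ y in 𝓝 x, HasFDerivAt (stripWave σ p k 0) (inner2L (-stripField σ p k y)) y := by
  have hcont := (contDiff_inner2_sub p k).continuous.tendsto x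
  filter_upwards [hcont.eventually hσ.eventuallyEq_nhds] with y hy
  have := hasFDerivAt_stripWave (θ := 0)
    (((hasDerivAt_id _).sub_const c).congr_of_eventuallyEq hy)
  simpa [stripField, add_comm] using this

lemma gradx_stripWave_of_eventuallyEq_sub {c : ℝ}
    (hσ : σ =ᶠ[𝓝 (inner2 (x - p) k)] (· - c)) (A : ℝ → ℝ) (t : ℝ) :
    gradx (fun z => A z.1 * stripWave σ p k 0 z.2) t x = -(A t • stripField σ p k x) := by
  rw [gradx_time_mul (eventually_hasFDerivAt_stripWave hσ).self_of_nhds, smul_neg]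

lemma lapx_stripWave_of_eventuallyEq_sub {c : ℝ}
    (hσ : σ =ᶠ[𝓝 (inner2 (x - p) k)] (· - c)) (A : ℝ → ℝ) (t : ℝ) :
    lapx (fun z => A z.1 * stripWave σ p k 0 z.2) t x = 0 := by
  have hσ' : HasDerivAt σ 1 (inner2 (x - p) k) :=
    ((hasDerivAt_id _).sub_const c).congr_of_eventuallyEq hσ
  have hu : ∀ᶠ y in 𝓝 x, HasFDerivAt (stripWave σ p k 0)
      (inner2L (stripWave σ p k 0 y • (2 * π) • k +
        stripWave σ p k (π / 2) y • (2 * π) • pperp k)) y := by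
    filter_upwards [eventually_hasFDerivAt_stripWave hσ] with y hy
    simpa [stripField, smul_comm (2 * π), add_comm] using hy
  rw [lapx_time_mul hu (hasFDerivAt_stripWave hσ') (hasFDerivAt_stripWave hσ'),
    add_halves, ← zero_add π, stripWave_add_pi]
  simp only [inner2, pperp, Prod.smul_fst, Prod.smul_snd, Prod.fst_add, Prod.snd_add, smul_eq_mul]
  ring

end StripWave

section Flux

lemma integral_cos_two_pi_mul_eq_zero (y : ℝ) (m : ℤ) : ∫ s in y..y + m, cos (2 * π * s) = 0 := by
  rw [intervalIntegral.integral_comp_mul_left cos Real.two_pi_pos.ne', integral_cos, mul_add,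
    mul_comm (2 * π) (m : ℝ), Real.sin_add_int_mul_two_pi, sub_self, smul_zero]

lemma inner2_add_smul_sub (p q e k : V2) (s : ℝ) :
    inner2 (q + s • e - p) k = inner2 (q - p) k + inner2 e k * s := by
  simp only [inner2, Prod.fst_sub, Prod.snd_sub, Prod.fst_add, Prod.snd_add, Prod.smul_fst,
    Prod.smul_snd, smul_eq_mul]
  ring

lemma integral_inner2_gradx_stripWave {σ : ℝ → ℝ} (hσ : Differentiable ℝ σ) {p q k e : V2}
    (he : inner2 e k = 0) {ℓ : ℝ} {m : ℤ} (hm : inner2 (ℓ • e) (pperp k) = m) (A : ℝ → ℝ) (t : ℝ) :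
    ∫ s in (0 : ℝ)..ℓ, inner2 (gradx (fun z => A z.1 * stripWave σ p k 0 z.2) t (q + s • e))
      (pperp e) = 0 := by
  set ξ := inner2 (q - p) k
  set η := inner2 (q - p) (pperp k)
  set κ := inner2 e (pperp k)
  have hpair (c c' : ℝ) : inner2 (A t • (2 * π) • (c • k + c' • pperp k)) (pperp e) =
      -(A t * (2 * π) * c * κ) := by
    simp only [inner2, pperp, κ, Prod.smul_fst, Prod.smul_snd, Prod.fst_add, Prod.snd_add,
      smul_eq_mul] at he ⊢
    linear_combination A t * (2 * π) * c' * he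
  have hintegrand (s : ℝ) :
      inner2 (gradx (fun z => A z.1 * stripWave σ p k 0 z.2) t (q + s • e)) (pperp e) =
        -(A t * (2 * π) * deriv σ ξ * exp (2 * π * σ ξ)) * (κ * cos (2 * π * (η + κ * s))) := by
    rw [gradx_time_mul (hasFDerivAt_stripWave (hσ _).hasDerivAt), hpair]
    simp only [stripWave, inner2_add_smul_sub, he, zero_mul, add_zero]
    ring
  have hlength : η + κ * ℓ = η + m := by
    rw [← hm]
    simp only [inner2, κ, Prod.smul_fst, Prod.smul_snd, smul_eq_mul]
    ring
  simp only [hintegrand]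
  rw [intervalIntegral.integral_const_mul, intervalIntegral.integral_const_mul,
    intervalIntegral.mul_integral_comp_add_mul (f := fun y => cos (2 * π * y)), mul_zero, add_zero,
    hlength, integral_cos_two_pi_mul_eq_zero, mul_zero]

end Flux

section Acceleration

lemma exists_nonvanishing_field_with_potential {p e : V2} (he : en e = 1) {d : ℝ} (hd : 0 < d)
    (hspacing : ∀ y ∈ periodizedLine p e, ∀ z ∈ periodizedLine p e,
      inner2 (z - y) (pperp e) ≠ 0 → 2 * d < |inner2 (z - y) (pperp e)|) :
    ∃ (W : V2 → V2) (u : V2 → ℝ), ContDiff ℝ ∞ W ∧ ContDiff ℝ ∞ u ∧ Zper W ∧ Zper u ∧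
      (∀ x, 1 ≤ en (W x)) ∧
      (∀ (a : ℝ → ℝ) t x, x ∉ stripAround (periodizedLine p e) (pperp e) d →
        gradx (fun z => a z.1 * u z.2) t x = -(a t • W x) ∧
          lapx (fun z => a z.1 * u z.2) t x = 0) ∧
      ∀ (a : ℝ → ℝ) (t : ℝ) (q e' : V2) (ℓ : ℝ), (∃ m n : ℤ, ℓ • e' = ((m : ℝ), (n : ℝ))) →
        Disjoint (periodizedLine q e') (periodizedLine p e) →
        ∫ s in (0 : ℝ)..ℓ,
          inner2 (gradx (fun z => a z.1 * u z.2) t (q + s • e')) (pperp e') = 0 := by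
  have hne : pperp e ≠ 0 := fun h0 => by
    have := en_pperp e
    rw [h0, he] at this
    simp [en] at this
  obtain ⟨h, a, b, hdh, hab, hn⟩ := exists_eq_smul_isCoprime hne (show 0 < 2 * d by positivity)
    fun i j => by
      simpa [inner2] using hspacing p ⟨0, 0, 0, by simp⟩ (p + ((i : ℝ), (j : ℝ)))
        ⟨0, i, j, by simp⟩
  have hh : 0 < h := by linarith
  obtain ⟨σ, hσ, hper, hnonneg, htrans⟩ := exists_smooth_sawtooth (show 0 < d / h by positivity)
    (by rw [div_lt_iff₀ hh]; linarith)
  set k : V2 := ((a : ℝ), (b : ℝ))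
  refine ⟨stripField σ p k, stripWave σ p k 0, contDiff_stripField hσ, contDiff_stripWave hσ,
    zper_stripField hper p a b, zper_stripWave hper p a b 0,
    fun x => one_le_en_stripField hnonneg (one_le_en_of_isCoprime hab), fun A t x hx => ?_,
    fun A t q e' ℓ ⟨m, n, hmn⟩ hdisj => ?_⟩
  · obtain ⟨c, hc⟩ := htrans (inner2 (x - p) k) <| not_le.1 fun hle =>
      hx (mem_stripAround_of_abs_inner2_sub_le he hh hab hn hle)
    exact ⟨gradx_stripWave_of_eventuallyEq_sub hc A t, lapx_stripWave_of_eventuallyEq_sub hc A t⟩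
  · have hparallel : inner2 e' k = 0 := by
      have := inner2_pperp_eq_zero_of_disjoint hdisj
      rw [hn, inner2_smul_right] at this
      exact (mul_eq_zero.1 this).resolve_left hh.ne'
    refine integral_inner2_gradx_stripWave (hσ.differentiable (by simp)) hparallel
      (m := m * b - n * a) ?_ A t
    rw [hmn]
    simp only [inner2, pperp, k]
    push_cast
    ring

theorem accelerating_field_strip_general
    (p eH : V2) (heH : en eH = 1) (d : ℝ) (hd : 0 < d)
    (hspacing : ∀ y ∈ periodizedLine p eH, ∀ z ∈ periodizedLine p eH,
      inner2 (z - y) (pperp eH) ≠ 0 → 2 * d < |inner2 (z - y) (pperp eH)|)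
    (𝔟 : ℝ) (τ : ℝ) (hτ : 0 < τ) (M : ℝ) (hM : 0 ≤ M) :
    ∃ Mt > (0 : ℝ), ∃ (ℰ : ℝ × V2 → V2) (φ : ℝ × V2 → ℝ),
      ContDiff ℝ ∞ ℰ ∧ ContDiff ℝ ∞ φ ∧
      (∀ t, Zper fun x => ℰ (t, x)) ∧ (∀ t, Zper fun x => φ (t, x)) ∧
      (∀ t x, x ∉ stripAround (periodizedLine p eH) (pperp eH) d → ℰ (t, x) = -gradx φ t x) ∧
      (∃ δ > (0 : ℝ), ∀ t x, t ≤ δ ∨ τ - δ ≤ t → ℰ (t, x) = 0) ∧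
      (∀ t x, x ∉ stripAround (periodizedLine p eH) (pperp eH) d → lapx φ t x = 0) ∧
      (∀ (q eD : V2) (ℓ : ℝ), (∃ m n : ℤ, ℓ • eD = ((m : ℝ), (n : ℝ))) →
        Disjoint (periodizedLine q eD) (periodizedLine p eH) →
        ∀ t, (∫ s in (0 : ℝ)..ℓ, inner2 (gradx φ t (q + s • eD)) (pperp eD)) = 0) ∧
      (∀ c > (0 : ℝ), ∀ Force : ℝ → V2 → V2 → V2, (∀ t x v, en (Force t x v) ≤ 1) →
        ∀ x v : V2, en v < M → ∀ X V : ℝ → V2,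
          IsRelChar c
            (fun t y w => Force t y w + ℰ (t, y) + 𝔟 • pperp (vhat c w)) 0 x v X V →
          M + 1 ≤ en (V τ) ∧ en (V τ) < Mt) := by
  obtain ⟨W, u, hW, hu, hWper, huper, hWone, hoff, hflux⟩ :=
    exists_nonvanishing_field_with_potential heH hd hspacing
  set W₂ : V2 → WithLp 2 (ℝ × ℝ) := fun x => WithLp.toLp 2 (W x)
  have hW₂ : ContDiff ℝ ∞ W₂ :=
    (WithLp.prodContinuousLinearEquiv 2 ℝ ℝ ℝ).symm.contDiff.comp hW
  have hW₂per : Zper W₂ := fun x m n => congrArg (WithLp.toLp 2) (hWper x m n)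
  obtain ⟨K, hK⟩ := hW₂per.exists_norm_le hW₂.continuous
  obtain ⟨L, hL⟩ := hW₂per.exists_lipschitzWith (hW₂.of_le (mod_cast le_top))
  obtain ⟨a, ha, ⟨δ, hδ, hvanish⟩, R, hR, hacc⟩ := exists_accelerating_amplitude hL hK
    (fun x => (hWone x).trans_eq (norm_toLp_eq_en _).symm) (abs_nonneg 𝔟) hτ hM
  refine ⟨R, hR, fun z => a z.1 • W z.2, fun z => a z.1 * u z.2,
    (ha.comp contDiff_fst).smul (hW.comp contDiff_snd),
    (ha.comp contDiff_fst).mul (hu.comp contDiff_snd),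
    fun t x m n => congrArg (a t • ·) (hWper x m n),
    fun t x m n => congrArg (a t * ·) (huper x m n),
    fun t x hx => by rw [(hoff a t x hx).1, neg_neg],
    ⟨δ, hδ, fun t x ht => by simp only [hvanish t ht, zero_smul]⟩,
    fun t x hx => (hoff a t x hx).2,
    fun q eD ℓ hper hdisj t => hflux a t q eD ℓ hper hdisj,
    fun c _ Force hF x v hv X V h => ?_⟩
  have := hacc X _ (h.isDrivenMotion hF) (by rwa [norm_toLp_eq_en, h.2.1])
  simpa only [norm_toLp_eq_en] using this

end Acceleration

end

/-- **Accelerating electric field (Lemma 4.1): a smooth field, gradient and harmonic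
outside the strip `ℋ_d`, with zero flux through the line `𝒟`, which pushes every
particle of initial speed `< M` above speed `M + 1` at time `τ`, robustly under any
perturbing force of sup norm at most 1.** -/
theorem accelerating_field_strip
    (ω : Set V2) (hωopen : IsOpen ω) (hωper : Zper fun x => x ∈ ω)
    -- the line ℋ: periodized line through p with unit direction eH, unit normal pperp eH
    (p eH : V2) (heH : en eH = 1)
    (d : ℝ) (hd : 0 < d)
    (hHclosed : IsClosed (periodizedLine p eH))
    (hH2d : stripAround (periodizedLine p eH) (pperp eH) (2 * d) ⊆ ω)
    -- 4d is less than the distance between two successive lines of the preimage of ℋ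
    (hspacing : ∀ y ∈ periodizedLine p eH, ∀ z ∈ periodizedLine p eH,
      inner2 (z - y) (pperp eH) ≠ 0 → 4 * d < |inner2 (z - y) (pperp eH)|)
    -- the closed line 𝒟 = {q + s·eD}, of length ℓ, not meeting ω, with unit normal pperp eD
    (q eD : V2) (heD : en eD = 1) (ℓ : ℝ) (hℓ : 0 < ℓ)
    (hDper : ∃ m n : ℤ, ℓ • eD = ((m : ℝ), (n : ℝ)))
    (hDω : ∀ x ∈ periodizedLine q eD, x ∉ ω)
    (𝔟 : ℝ) (τ : ℝ) (hτ : 0 < τ) (M : ℝ) (hM : 0 < M) :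
    ∃ Mt > (0 : ℝ), ∃ (ℰ : ℝ × V2 → V2) (φ : ℝ × V2 → ℝ), ∃ c₀ > (0 : ℝ),
      ContDiff ℝ (⊤ : ℕ∞) ℰ ∧ ContDiff ℝ (⊤ : ℕ∞) φ ∧
      (∀ t, Zper fun x => ℰ (t, x)) ∧ (∀ t, Zper fun x => φ (t, x)) ∧
      -- ℰ = −∇φ outside the strip ℋ_d
      (∀ t ∈ Set.Icc (0 : ℝ) τ, ∀ x,
        x ∉ stripAround (periodizedLine p eH) (pperp eH) d → ℰ (t, x) = -gradx φ t x) ∧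
      -- supp ℰ ⊂ (0,τ) × 𝕋²
      (∃ δ > (0 : ℝ), ∀ t x, t ≤ δ ∨ τ - δ ≤ t → ℰ (t, x) = 0) ∧
      -- φ is harmonic outside the strip ℋ_d
      (∀ t ∈ Set.Icc (0 : ℝ) τ, ∀ x,
        x ∉ stripAround (periodizedLine p eH) (pperp eH) d → lapx φ t x = 0) ∧
      -- zero flux of ∇φ through 𝒟
      (∀ t ∈ Set.Icc (0 : ℝ) τ,
        (∫ s in (0 : ℝ)..ℓ, inner2 (gradx φ t (q + s • eD)) (pperp eD)) = 0) ∧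
      -- the acceleration property, robust under any perturbing force of norm ≤ 1
      (∀ c ≥ c₀, ∀ Force : ℝ → V2 → V2 → V2,
        (∀ t, ∃ Lip : NNReal, LipschitzWith Lip fun z : V2 × V2 => Force t z.1 z.2) →
        (∀ t x v, en (Force t x v) ≤ 1) →
        ∀ x v : V2, en v < M →
        ∀ X V : ℝ → V2,
          IsRelChar c
            (fun t y w => Force t y w + ℰ (t, y) + 𝔟 • pperp (vhat c w)) 0 x v X V →
          M + 1 ≤ en (V τ) ∧ en (V τ) < Mt) := by
  have hDH : Disjoint (periodizedLine q eD) (periodizedLine p eH) :=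
    Set.disjoint_left.2 fun x hxD hxH =>
      hDω x hxD (hH2d (subset_stripAround _ _ (by positivity) hxH))
  obtain ⟨Mt, hMt, ℰ, φ, hℰ, hφ, hℰper, hφper, hgrad, hsupp, hharm, hflux, hacc⟩ :=
    accelerating_field_strip_general p eH heH d hd
      (fun y hy z hz hyz => lt_trans (by linarith) (hspacing y hy z hz hyz)) 𝔟 τ hτ M hM.le
  exact ⟨Mt, hMt, ℰ, φ, 1, one_pos, hℰ, hφ, hℰper, hφper, fun t _ => hgrad t, hsupp,
    fun t _ => hharm t, fun t _ => hflux q eD ℓ hDper hDH t,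
    fun c hc Force _ => hacc c (one_pos.trans_le hc) Force⟩

end
end

section
/- Let x₀ ∈ 𝕋², r₀ > 0, M̄ > 1, and let 𝔟 ∈ ℝ∖{0} be a constant magnetic field. There exist c₀ > 0 (depending on 𝔟, x₀, r₀), m̲ > 0 (depending only on 𝔟, x₀, r₀), T₀ > 0 and κ > 0 (depending on 𝔟, x₀, r₀, M̄) such that for every speed of light c ≥ c₀ and every force F ∈ L^∞(0,T₀; W^{1,∞}(𝕋²×ℝ²; ℝ²)) with ‖F‖_{L^∞} ≤ κ, the relativistic characteristics (X̄, V̄) associated with the force v̂⊥𝔟 + F satisfy: for every x ∈ 𝕋² and every v ∈ ℝ² with m̲ ≤ |v| ≤ M̄, there exists t ∈ (T₀/4, 3T₀/4) with X̄(t,0,x,v) ∈ B(x₀, r₀/2), and moreover |v|/2 ≤ |V̄(s,0,x,v)| ≤ 2|v| for all s ∈ [0,T₀]. -/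
noncomputable section

open MeasureTheory Real

/-! In complex notation the momentum satisfies `z' = -i𝔟g z + f`, where `g` is the inverse Lorentz
factor, and the position satisfies `w' = g z`. Without the perturbation `f`, the momentum rotates
with phase `-𝔟 ∫ g` and the guiding center `w - (i/𝔟)z` is constant, so the trajectory runs along a
circle of radius `|v|/|𝔟|`; the perturbation moves it away from that circle by at most
`2 sup |f| T/|𝔟|` up to time `T`. A circle of large radius `R` passes at distance `O(R^{-1/2})` from
every translate of `ℤ²`, because its height varies slowly near the top. As momenta stay bounded and
`c ≥ c₀`, the angular speed `|𝔟|g` is bounded below, and a long enough time window contains a full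
turn. -/

section Circle

open Complex (I arg)

theorem circleMap_norm_arg_add (p u : ℂ) (θ : ℝ) :
    circleMap p ‖u‖ (arg u + θ) = p + Complex.exp (θ * I) * u := by
  conv_rhs => rw [← Complex.norm_mul_exp_arg_mul_I u]
  rw [circleMap, Complex.ofReal_add, add_mul, Complex.exp_add]
  ring

theorem norm_circleMap_arg_sub_add (p u : ℂ) (R : ℝ) :
    ‖circleMap p R (arg u) - (p + u)‖ = |‖u‖ - R| := by
  have h : circleMap p R (arg u) - (p + u) =
      ((R - ‖u‖ : ℝ) : ℂ) * Complex.exp (arg u * I) := by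
    rw [circleMap]
    push_cast
    linear_combination Complex.norm_mul_exp_arg_mul_I u
  rw [h, norm_mul, Complex.norm_exp_ofReal_mul_I, mul_one, Complex.norm_real, Real.norm_eq_abs,
    abs_sub_comm]

theorem exists_int_abs_norm_add_sub_le (a : ℂ) {R : ℝ} (hR : 1 ≤ R) :
    ∃ m n : ℤ, |‖a + m + n * I‖ - R| ≤ 4 / √R := by
  -- A height `v` in `(R - 1, R]` makes the ideal abscissa `S = √(R² - v²)` of order `√R`, so that
  -- rounding `S` to an admissible abscissa `u` changes `u² + v²` by `O(√R)` only.
  set v : ℝ := a.im + ⌊R - a.im⌋ with hv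
  have hvR : v ≤ R := by linarith [Int.floor_le (R - a.im)]
  have hRv : R - 1 < v := by linarith [Int.lt_floor_add_one (R - a.im)]
  set S : ℝ := √(R ^ 2 - v ^ 2)
  have hS : S ^ 2 = R ^ 2 - v ^ 2 := Real.sq_sqrt (by nlinarith)
  have hS0 : 0 ≤ S := Real.sqrt_nonneg _
  set u : ℝ := a.re + ⌊S - a.re⌋ with hu
  have huS : u ≤ S := by linarith [Int.floor_le (S - a.re)]
  have hSu : S - 1 < u := by linarith [Int.lt_floor_add_one (S - a.re)]
  refine ⟨⌊S - a.re⌋, ⌊R - a.im⌋, ?_⟩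
  set d : ℝ := ‖a + ⌊S - a.re⌋ + ⌊R - a.im⌋ * I‖ with hnorm
  have hd : d ^ 2 = u ^ 2 + v ^ 2 := by
    have h : a + ⌊S - a.re⌋ + ⌊R - a.im⌋ * I = u + v * I := by
      apply Complex.ext <;> simp [hu, hv]
    rw [hnorm, h, Complex.sq_norm, Complex.normSq_add_mul_I]
  have hsqrt : 1 ≤ √R := Real.one_le_sqrt.mpr hR
  have hRR : √R ^ 2 = R := Real.sq_sqrt (by linarith)
  have hSR : 2 * S + 1 ≤ 4 * √R := by nlinarith
  have hsq : |d ^ 2 - R ^ 2| ≤ 4 * √R := abs_le.mpr ⟨by nlinarith, by nlinarith⟩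
  rw [le_div_iff₀ (by positivity), ← mul_le_mul_iff_of_pos_right (by positivity : 0 < √R)]
  have hd0 : 0 ≤ d := norm_nonneg _
  calc |d - R| * √R * √R = |d - R| * R := by rw [mul_assoc, ← sq, hRR]
    _ ≤ |d - R| * |d + R| := by gcongr; exact (by linarith : R ≤ d + R).trans (le_abs_self _)
    _ = |d ^ 2 - R ^ 2| := by rw [← abs_mul]; ring_nf
    _ ≤ 4 * √R := hsq

theorem exists_norm_circleMap_sub_lattice_le (p x : ℂ) {R : ℝ} (hR : 1 ≤ R) :
    ∃ θ : ℝ, ∃ m n : ℤ, ‖circleMap p R θ - (x + m + n * I)‖ ≤ 4 / √R := by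
  obtain ⟨m, n, h⟩ := exists_int_abs_norm_add_sub_le (x - p) hR
  refine ⟨arg (x - p + m + n * I), m, n, ?_⟩
  rw [← norm_circleMap_arg_sub_add p] at h
  convert h using 2
  ring

end Circle

theorem exists_mem_Icc_eq_of_periodic {α : Type*} {F : ℝ → α} {p : ℝ} (hF : F.Periodic p)
    (hp : 0 < p) {s t : ℝ} (hst : s < t) {θ θ' : ℝ → ℝ}
    (hθ : ∀ τ ∈ Set.Icc s t, HasDerivAt θ (θ' τ) τ)
    (hθ' : ∀ τ ∈ Set.Icc s t, p ≤ |θ' τ| * (t - s)) (a : ℝ) :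
    ∃ τ ∈ Set.Icc s t, F (θ τ) = F a := by
  have hcont : ContinuousOn θ (Set.Icc s t) := fun τ hτ =>
    (hθ τ hτ).continuousAt.continuousWithinAt
  have hvariation : p ≤ |θ t - θ s| := by
    obtain ⟨τ, hτ, hslope⟩ := exists_hasDerivAt_eq_slope θ θ' hst hcont
      fun τ hτ => hθ τ (Set.Ioo_subset_Icc_self hτ)
    have h := hθ' τ (Set.Ioo_subset_Icc_self hτ)
    rwa [hslope, abs_div, abs_of_pos (sub_pos.mpr hst),
      div_mul_cancel₀ _ (sub_pos.mpr hst).ne'] at h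
  obtain ⟨y, ⟨hy, hy'⟩, hay⟩ := hF.exists_mem_Ico hp a (min (θ s) (θ t))
  have hmem : y ∈ Set.uIcc (θ s) (θ t) :=
    ⟨hy, by linarith [max_sub_min_eq_abs (θ s) (θ t)]⟩
  rw [← Set.uIcc_of_le hst.le] at hcont ⊢
  obtain ⟨τ, hτ, rfl⟩ := intermediate_value_uIcc hcont hmem
  exact ⟨τ, hτ, hay.symm⟩

theorem norm_sub_exp_smul_le {E : Type*} [NormedAddCommGroup E] [NormedSpace ℂ E]
    {θ ω : ℝ → ℝ} {z f : ℝ → E} {κ s t : ℝ} (hst : s ≤ t)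
    (hθ : ∀ τ ∈ Set.Icc s t, HasDerivAt θ (ω τ) τ)
    (hz : ∀ τ ∈ Set.Icc s t, HasDerivAt z ((ω τ * Complex.I) • z τ + f τ) τ)
    (hf : ∀ τ ∈ Set.Icc s t, ‖f τ‖ ≤ κ) :
    ‖z t - Complex.exp ((θ t - θ s : ℝ) * Complex.I) • z s‖ ≤ κ * (t - s) := by
  set e : ℝ → ℂ := fun τ => Complex.exp ((θ t - θ τ : ℝ) * Complex.I) with he
  have hderiv : ∀ τ ∈ Set.Icc s t, HasDerivAt (fun τ => e τ • z τ) (e τ • f τ) τ := fun τ hτ => by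
    have h := (((hθ τ hτ).const_sub (θ t)).ofReal_comp.mul_const Complex.I).cexp.smul (hz τ hτ)
    refine h.congr_deriv ?_
    rw [smul_add, smul_smul, add_right_comm, ← add_smul]
    simp [he]
  have h := norm_image_sub_le_of_norm_deriv_le_segment'
    (fun τ hτ => (hderiv τ hτ).hasDerivWithinAt)
    (fun τ hτ => by
      rw [norm_smul, Complex.norm_exp_ofReal_mul_I, one_mul]
      exact hf τ (Set.Ico_subset_Icc_self hτ))
    t (Set.right_mem_Icc.mpr hst)
  simpa [he] using h

theorem exists_forall_hasDerivAt {E : Type*} [NormedAddCommGroup E] [NormedSpace ℝ E]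
    [CompleteSpace E] {f : ℝ → E} (hf : Continuous f) : ∃ F : ℝ → E, ∀ t, HasDerivAt F (f t) t :=
  ⟨fun t => ∫ τ in (0 : ℝ)..t, f τ, fun t => (hf.integral_hasStrictDerivAt 0 t).hasDerivAt⟩

section Gyration

open Complex (I arg)

/-- Position `w` and momentum `z`, in complex notation, of a particle of inverse Lorentz factor `g`
in the constant magnetic field `b`, subject to an additional force `f`. The inverse Lorentz factor
is treated as a given function of time; `v ↦ v⊥` is multiplication by `-i`. -/
structure IsGyration (b : ℝ) (g : ℝ → ℝ) (f w z : ℝ → ℂ) : Prop where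
  hasDerivAt_position : ∀ t, HasDerivAt w (g t * z t) t
  hasDerivAt_momentum : ∀ t, HasDerivAt z (((-(b * g t) : ℝ) * I) * z t + f t) t

/-- The vector from the guiding center to the position of a particle of momentum `z` in the
constant magnetic field `b`. -/
def larmorVector (b : ℝ) (z : ℂ) : ℂ := I / b * z

theorem norm_larmorVector (b : ℝ) (z : ℂ) : ‖larmorVector b z‖ = ‖z‖ / |b| := by
  rw [larmorVector, norm_mul, norm_div, Complex.norm_I, Complex.norm_real, Real.norm_eq_abs]
  ring

/-- The center of the circle run along by a particle of position `w` and momentum `z` in the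
constant magnetic field `b`, in the absence of any other force. -/
def guidingCenter (b : ℝ) (w z : ℂ) : ℂ := w - larmorVector b z

namespace IsGyration

variable {b κ s t : ℝ} {g θ : ℝ → ℝ} {f w z : ℝ → ℂ}

theorem norm_momentum_sub_exp_mul_le (h : IsGyration b g f w z)
    (hθ : ∀ τ, HasDerivAt θ (-(b * g τ)) τ) (hst : s ≤ t) (hf : ∀ τ ∈ Set.Icc s t, ‖f τ‖ ≤ κ) :
    ‖z t - Complex.exp ((θ t - θ s : ℝ) * I) * z s‖ ≤ κ * (t - s) :=
  norm_sub_exp_smul_le hst (fun τ _ => hθ τ) (fun τ _ => h.hasDerivAt_momentum τ) hf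

theorem abs_norm_momentum_sub_le (h : IsGyration b g f w z) (hg : Continuous g) (hst : s ≤ t)
    (hf : ∀ τ ∈ Set.Icc s t, ‖f τ‖ ≤ κ) : |‖z t‖ - ‖z s‖| ≤ κ * (t - s) := by
  obtain ⟨θ, hθ⟩ := exists_forall_hasDerivAt (hg.const_mul b).neg
  have hle := (abs_norm_sub_norm_le _ _).trans (h.norm_momentum_sub_exp_mul_le hθ hst hf)
  rwa [norm_mul, Complex.norm_exp_ofReal_mul_I, one_mul] at hle

theorem norm_guidingCenter_sub_le (h : IsGyration b g f w z) (hb : b ≠ 0) (hst : s ≤ t)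
    (hf : ∀ τ ∈ Set.Icc s t, ‖f τ‖ ≤ κ) :
    ‖guidingCenter b (w t) (z t) - guidingCenter b (w s) (z s)‖ ≤ κ / |b| * (t - s) := by
  have hderiv : ∀ τ, HasDerivAt (fun τ => guidingCenter b (w τ) (z τ)) (-larmorVector b (f τ)) τ :=
    fun τ => by
      refine ((h.hasDerivAt_position τ).sub
        ((h.hasDerivAt_momentum τ).const_mul (I / b))).congr_deriv ?_
      have hb' : (b : ℂ) ≠ 0 := Complex.ofReal_ne_zero.mpr hb
      simp only [larmorVector]
      push_cast
      field_simp
      linear_combination (b * g τ * z τ) * Complex.I_sq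
  refine norm_image_sub_le_of_norm_deriv_le_segment' (fun τ _ => (hderiv τ).hasDerivWithinAt)
    (fun τ hτ => ?_) t (Set.right_mem_Icc.mpr hst)
  rw [norm_neg, norm_larmorVector]
  gcongr
  exact hf τ (Set.Ico_subset_Icc_self hτ)

theorem norm_position_sub_circleMap_le (h : IsGyration b g f w z) (hb : b ≠ 0)
    (hθ : ∀ τ, HasDerivAt θ (-(b * g τ)) τ) (hst : s ≤ t) (hf : ∀ τ ∈ Set.Icc s t, ‖f τ‖ ≤ κ) :
    ‖w t - circleMap (guidingCenter b (w s) (z s)) (‖z s‖ / |b|)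
      (arg (larmorVector b (z s)) + (θ t - θ s))‖ ≤ 2 * (κ / |b| * (t - s)) := by
  set e : ℂ := Complex.exp ((θ t - θ s : ℝ) * I)
  have hmomentum : ‖larmorVector b (z t - e * z s)‖ ≤ κ / |b| * (t - s) := by
    rw [norm_larmorVector, div_mul_eq_mul_div]
    gcongr
    exact h.norm_momentum_sub_exp_mul_le hθ hst hf
  rw [← norm_larmorVector, circleMap_norm_arg_add]
  calc ‖w t - (guidingCenter b (w s) (z s) + e * larmorVector b (z s))‖
      = ‖(guidingCenter b (w t) (z t) - guidingCenter b (w s) (z s)) +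
          larmorVector b (z t - e * z s)‖ := by
        simp only [guidingCenter, larmorVector]
        ring_nf
    _ ≤ κ / |b| * (t - s) + κ / |b| * (t - s) :=
        norm_add_le_of_le (h.norm_guidingCenter_sub_le hb hst hf) hmomentum
    _ = 2 * (κ / |b| * (t - s)) := by ring

theorem exists_norm_position_sub_lattice_le {t₀ : ℝ} (h : IsGyration b g f w z) (hb : b ≠ 0)
    (hg : Continuous g) (hs : t₀ ≤ s) (hst : s < t) (hf : ∀ τ ∈ Set.Icc t₀ t, ‖f τ‖ ≤ κ)
    (hturn : ∀ τ ∈ Set.Icc s t, 2 * π ≤ |b * g τ| * (t - s)) (hz : 1 ≤ ‖z t₀‖ / |b|) (x : ℂ) :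
    ∃ τ ∈ Set.Icc s t, ∃ m n : ℤ, ‖w τ - (x + m + n * I)‖ ≤
      2 * (κ / |b| * (t - t₀)) + 4 / √(‖z t₀‖ / |b|) := by
  obtain ⟨θ, hθ⟩ := exists_forall_hasDerivAt (hg.const_mul b).neg
  obtain ⟨α, m, n, hα⟩ :=
    exists_norm_circleMap_sub_lattice_le (guidingCenter b (w t₀) (z t₀)) x hz
  obtain ⟨τ, hτ, hτα⟩ := exists_mem_Icc_eq_of_periodic
    (periodic_circleMap (guidingCenter b (w t₀) (z t₀)) (‖z t₀‖ / |b|)) Real.two_pi_pos hst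
    (fun τ _ => ((hθ τ).sub_const (θ t₀)).const_add (arg (larmorVector b (z t₀))))
    (fun τ hτ => (abs_neg (b * g τ)).symm ▸ hturn τ hτ) α
  have hκ : 0 ≤ κ := (norm_nonneg _).trans (hf t₀ ⟨le_rfl, hs.trans hst.le⟩)
  have hnear := h.norm_position_sub_circleMap_le hb hθ (hs.trans hτ.1)
    fun σ hσ => hf σ ⟨hσ.1, hσ.2.trans hτ.2⟩
  rw [hτα] at hnear
  refine ⟨τ, hτ, m, n, (norm_sub_le_norm_sub_add_norm_sub _ _ _).trans (add_le_add ?_ hα)⟩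
  exact hnear.trans (by gcongr; exact hτ.2)

end IsGyration

end Gyration

section Relativistic

/-- The Lorentz factor of a particle of momentum of norm `r`, for speed of light `c`. -/
def lorentzFactor (c r : ℝ) : ℝ := √(1 + r ^ 2 / c ^ 2)

theorem lorentzFactor_pos (c r : ℝ) : 0 < lorentzFactor c r := by
  unfold lorentzFactor
  positivity

theorem lorentzFactor_le_lorentzFactor {c c' r r' : ℝ} (hc : 0 < c) (hcc' : c ≤ c') (hr : 0 ≤ r)
    (hrr' : r ≤ r') : lorentzFactor c' r ≤ lorentzFactor c r' := by
  unfold lorentzFactor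
  gcongr

/-- The time in which a particle of momentum of norm `r` runs along a full circle in the constant
magnetic field `b`, for speed of light `c`. -/
def gyroperiod (b c r : ℝ) : ℝ := 2 * π * lorentzFactor c r / |b|

theorem gyroperiod_pos {b : ℝ} (hb : b ≠ 0) (c r : ℝ) : 0 < gyroperiod b c r := by
  have := lorentzFactor_pos c r
  unfold gyroperiod
  positivity

theorem two_pi_le_abs_mul_gyroperiod {b c c' r r' : ℝ} (hb : b ≠ 0) (hc : 0 < c) (hcc' : c ≤ c')
    (hr : 0 ≤ r) (hrr' : r ≤ r') :
    2 * π ≤ |b * (lorentzFactor c' r)⁻¹| * gyroperiod b c r' := by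
  have hpos := lorentzFactor_pos c' r
  have hle : 1 ≤ lorentzFactor c r' / lorentzFactor c' r :=
    (one_le_div hpos).mpr (lorentzFactor_le_lorentzFactor hc hcc' hr hrr')
  calc 2 * π ≤ 2 * π * (lorentzFactor c r' / lorentzFactor c' r) :=
        le_mul_of_one_le_right Real.two_pi_pos.le hle
    _ = |b * (lorentzFactor c' r)⁻¹| * gyroperiod b c r' := by
        rw [gyroperiod, abs_mul, abs_of_pos (inv_pos.mpr hpos)]
        field_simp

/-- The identification of the plane with `ℂ`. The norm of `V2` is the sup norm, so this is not an
isometry: the norm of `ℂ` corresponds to `en`. -/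
def toComplex : V2 ≃L[ℝ] ℂ := Complex.equivRealProdCLM.symm

theorem toComplex_apply (v : V2) : toComplex v = ⟨v.1, v.2⟩ := rfl

theorem norm_toComplex (v : V2) : ‖toComplex v‖ = en v := by
  rw [toComplex_apply, en, Complex.norm_eq_sqrt_sq_add_sq]

theorem toComplex_pperp (v : V2) : toComplex (pperp v) = -Complex.I * toComplex v := by
  apply Complex.ext <;> simp [toComplex_apply, pperp]

theorem toComplex_vhat (c : ℝ) (v : V2) :
    toComplex (vhat c v) = ((lorentzFactor c (en v))⁻¹ : ℝ) * toComplex v := by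
  rw [vhat, map_smul, Complex.real_smul, lorentzFactor, en, Real.sq_sqrt (by positivity), one_div]

theorem hasDerivAt_toComplex {Y : ℝ → V2} {Y' : V2} {t : ℝ} (h : HasDerivAt Y Y' t) :
    HasDerivAt (fun s => toComplex (Y s)) (toComplex Y') t :=
  toComplex.hasFDerivAt.comp_hasDerivAt t h

theorem mem_ballT2_iff {x x₀ : V2} {r : ℝ} : x ∈ ballT2 x₀ r ↔
    ∃ m n : ℤ, ‖toComplex x - (toComplex x₀ + m + n * Complex.I)‖ < r := by
  refine exists₂_congr fun m n => ?_
  rw [← norm_toComplex]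
  congr! 2
  apply Complex.ext <;> simp [toComplex_apply]

variable {b c κ s t : ℝ} {Force : ℝ → V2 → V2 → V2} {x v : V2} {X V : ℝ → V2}

theorem IsRelChar.isGyration
    (h : IsRelChar c (fun t y w => b • pperp (vhat c w) + Force t y w) s x v X V) :
    IsGyration b (fun t => (lorentzFactor c ‖toComplex (V t)‖)⁻¹)
      (fun t => toComplex (Force t (X t) (V t))) (fun t => toComplex (X t))
      (fun t => toComplex (V t)) where
  hasDerivAt_position t := by
    simpa only [norm_toComplex, ← toComplex_vhat] using hasDerivAt_toComplex (h.2.2 t).1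
  hasDerivAt_momentum t := by
    convert hasDerivAt_toComplex (h.2.2 t).2 using 1
    simp only [map_add, map_smul, toComplex_pperp, toComplex_vhat,
      norm_toComplex, Complex.real_smul]
    push_cast
    ring

theorem IsRelChar.continuous_inv_lorentzFactor (h : IsRelChar c Force s x v X V) :
    Continuous fun t => (lorentzFactor c ‖toComplex (V t)‖)⁻¹ := by
  have hV : Continuous V := continuous_iff_continuousAt.mpr fun t => (h.2.2 t).2.continuousAt
  have hfactor : Continuous fun t => lorentzFactor c ‖toComplex (V t)‖ := by
    unfold lorentzFactor
    fun_prop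
  exact hfactor.inv₀ fun t => (lorentzFactor_pos c _).ne'

theorem IsRelChar.abs_en_sub_le
    (h : IsRelChar c (fun t y w => b • pperp (vhat c w) + Force t y w) s x v X V) (hst : s ≤ t)
    (hF : ∀ τ ∈ Set.Icc s t, en (Force τ (X τ) (V τ)) ≤ κ) :
    |en (V t) - en v| ≤ κ * (t - s) := by
  simp only [← norm_toComplex] at hF ⊢
  rw [← h.2.1]
  exact h.isGyration.abs_norm_momentum_sub_le h.continuous_inv_lorentzFactor hst hF

theorem IsRelChar.exists_mem_ballT2 {c₀ M r : ℝ} (hb : b ≠ 0) (hc₀ : 0 < c₀) (hc : c₀ ≤ c)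
    (h : IsRelChar c (fun t y w => b • pperp (vhat c w) + Force t y w) s x v X V) (hst : s ≤ t)
    (hF : ∀ τ ∈ Set.Icc s (t + gyroperiod b c₀ M), en (Force τ (X τ) (V τ)) ≤ κ)
    (hM : ∀ τ ∈ Set.Icc t (t + gyroperiod b c₀ M), en (V τ) ≤ M) (hv : 1 ≤ en v / |b|)
    (hr : 2 * (κ / |b| * (t + gyroperiod b c₀ M - s)) + 4 / √(en v / |b|) < r) (x₀ : V2) :
    ∃ τ ∈ Set.Icc t (t + gyroperiod b c₀ M), X τ ∈ ballT2 x₀ r := by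
  simp only [← norm_toComplex] at hF hM
  rw [← h.2.1, ← norm_toComplex] at hv hr
  obtain ⟨τ, hτ, m, n, hmn⟩ := h.isGyration.exists_norm_position_sub_lattice_le hb
    h.continuous_inv_lorentzFactor hst (lt_add_of_pos_right t (gyroperiod_pos hb c₀ M)) hF
    (fun τ hτ => by
      rw [add_sub_cancel_left]
      exact two_pi_le_abs_mul_gyroperiod hb hc₀ hc (norm_nonneg _) (hM τ hτ))
    hv (toComplex x₀)
  exact ⟨τ, hτ, mem_ballT2_iff.mpr ⟨m, n, hmn.trans_lt hr⟩⟩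

end Relativistic

theorem four_div_sqrt_le {r R : ℝ} (hr : 0 < r) (hR : (4 / r) ^ 2 ≤ R) : 4 / √R ≤ r := by
  have hle : 4 / r ≤ √R := Real.le_sqrt_of_sq_le hR
  exact (div_le_comm₀ hr ((by positivity : 0 < 4 / r).trans_le hle)).mp hle

theorem bending_constant_field_general {r₀ : ℝ} (hr₀ : 0 < r₀) {𝔟 : ℝ} (h𝔟 : 𝔟 ≠ 0) :
    ∃ m > (0 : ℝ), ∀ c₀ > (0 : ℝ), ∀ Mb : ℝ, ∃ T₀ > (0 : ℝ), ∃ κ > (0 : ℝ),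
      ∀ c ≥ c₀, ∀ Force : ℝ → V2 → V2 → V2,
        (∀ t ∈ Set.Icc 0 T₀, ∀ x v, en (Force t x v) ≤ κ) →
        ∀ x₀ x v : V2, m ≤ en v → en v ≤ Mb →
        ∀ X V : ℝ → V2,
          IsRelChar c (fun t y w => 𝔟 • pperp (vhat c w) + Force t y w) 0 x v X V →
          (∃ t ∈ Set.Ioo (T₀ / 4) (3 * T₀ / 4), X t ∈ ballT2 x₀ (r₀ / 2)) ∧
          (∀ s ∈ Set.Icc (0 : ℝ) T₀, en v / 2 ≤ en (V s) ∧ en (V s) ≤ 2 * en v) := by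
  have hb : 0 < |𝔟| := abs_pos.mpr h𝔟
  set R : ℝ := max 1 ((4 / (r₀ / 4)) ^ 2)
  refine ⟨R * |𝔟|, by positivity, fun c₀ hc₀ Mb => ?_⟩
  set P : ℝ := gyroperiod 𝔟 c₀ (2 * Mb)
  have hP : 0 < P := gyroperiod_pos h𝔟 c₀ (2 * Mb)
  obtain ⟨κ, hκ, hκT⟩ : ∃ κ > 0, κ * (3 * P) = min (R * |𝔟| / 2) (r₀ / 16 * |𝔟|) :=
    ⟨_, by positivity, div_mul_cancel₀ _ (by positivity : 3 * P ≠ 0)⟩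
  refine ⟨3 * P, by positivity, κ, hκ, fun c hc Force hF x₀ x v hv hvM X V hchar => ?_⟩
  have hspeed : ∀ τ ∈ Set.Icc 0 (3 * P), en v / 2 ≤ en (V τ) ∧ en (V τ) ≤ 2 * en v := by
    intro τ hτ
    have hsub := abs_le.mp (hchar.abs_en_sub_le hτ.1 fun σ hσ => hF σ ⟨hσ.1, hσ.2.trans hτ.2⟩ _ _)
    have hκτ : κ * τ ≤ κ * (3 * P) := mul_le_mul_of_nonneg_left hτ.2 hκ.le
    have hmin := min_le_left (R * |𝔟| / 2) (r₀ / 16 * |𝔟|)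
    constructor <;> linarith
  have hR : R ≤ en v / |𝔟| := (le_div_iff₀ hb).mpr hv
  have hdrift : κ / |𝔟| * (P + P - 0) ≤ r₀ / 16 := by
    rw [div_mul_eq_mul_div, div_le_iff₀ hb]
    nlinarith [min_le_right (R * |𝔟| / 2) (r₀ / 16 * |𝔟|)]
  have hgap := four_div_sqrt_le (by positivity) ((le_max_right _ _).trans hR)
  obtain ⟨τ, hτ, hball⟩ := hchar.exists_mem_ballT2 h𝔟 hc₀ hc hP.le
    (fun σ hσ => hF σ ⟨hσ.1, by linarith [hσ.2]⟩ _ _)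
    (fun σ hσ => (hspeed σ ⟨by linarith [hσ.1], by linarith [hσ.2]⟩).2.trans
      (mul_le_mul_of_nonneg_left hvM zero_le_two))
    ((le_max_left _ _).trans hR) (by linarith : _ < r₀ / 2) x₀
  exact ⟨⟨τ, ⟨by linarith [hτ.1], by linarith [hτ.2]⟩, hball⟩, hspeed⟩

/-- **Bending lemma for a constant nonzero magnetic field** (Lemma 4.2):
all moderately fast trajectories of `v̂⊥𝔟 + F` visit the ball `B(x₀, r₀/2)`,
robustly under a small perturbing force `F`, and their speeds stay comparable
to the initial speed. The constants `c₀` and `m̲` depend only on `𝔟, x₀, r₀`,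
while `T₀` and `κ` may also depend on `M̄`. -/
theorem bending_constant_field
    (x₀ : V2) (r₀ : ℝ) (hr₀ : 0 < r₀) (𝔟 : ℝ) (h𝔟 : 𝔟 ≠ 0) :
    ∃ c₀ > (0 : ℝ), ∃ m > (0 : ℝ), ∀ Mb : ℝ, 1 < Mb →
      ∃ T₀ > (0 : ℝ), ∃ κ > (0 : ℝ),
        ∀ c ≥ c₀, ∀ Force : ℝ → V2 → V2 → V2,
          (∀ t, ∃ Lip : NNReal, LipschitzWith Lip fun z : V2 × V2 => Force t z.1 z.2) →
          (∀ t x v, en (Force t x v) ≤ κ) →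
          ∀ x v : V2, m ≤ en v → en v ≤ Mb →
          ∀ X V : ℝ → V2,
            IsRelChar c (fun t y w => 𝔟 • pperp (vhat c w) + Force t y w) 0 x v X V →
            (∃ t ∈ Set.Ioo (T₀ / 4) (3 * T₀ / 4), X t ∈ ballT2 x₀ (r₀ / 2)) ∧
            (∀ s ∈ Set.Icc (0 : ℝ) T₀,
              en v / 2 ≤ en (V s) ∧ en (V s) ≤ 2 * en v) := by
  obtain ⟨m, hm, hbend⟩ := bending_constant_field_general hr₀ h𝔟
  refine ⟨1, one_pos, m, hm, fun Mb _ => ?_⟩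
  obtain ⟨T₀, hT₀, κ, hκ, h⟩ := hbend 1 one_pos Mb
  exact ⟨T₀, hT₀, κ, hκ, fun c hc Force _ hF => h c hc Force (fun t _ => hF t) x₀⟩

end
end
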